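/- arXiv:1501.01848 — 10 statements merged into one kernel-verified Lean document; each statement's English description precedes it below -/
import Mathlib

section
/- Let n ≥ 1 and k ≥ 1 be integers, let G be a homogeneous polynomial of degree k in n variables with real coefficients, let B be a positive definite symmetric real n×n matrix, and let α > 0 be real. Then ∫_{ℝⁿ} G(x)·(xᵀBx)^{-k/2}·exp(−α·(xᵀBx)/4) dx = (α/4)^{k/2} · Γ(n/2)/Γ((k+n)/2) · ∫_{ℝⁿ} G(x)·exp(−α·(xᵀBx)/4) dx, where the integrand on the left is interpreted as 0 at x = 0 and Γ denotes the Gamma function. -/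
open MeasureTheory Real Matrix

lemma aux_integrable (n m : ℕ) (b : ℝ) (hb : 0 < b) :
    Integrable (fun r : Set.Ioi (0 : ℝ) => r.1 ^ m * Real.exp (-b * r.1 ^ 2))
      (Measure.volumeIoiPow n) := by
  have h := integrableOn_rpow_mul_exp_neg_mul_sq hb (s := ((n + m : ℕ) : ℝ))
    (lt_of_lt_of_le (by norm_num) (Nat.cast_nonneg _))
  rw [integrableOn_iff_comap_subtypeVal measurableSet_Ioi] at h
  rw [Measure.volumeIoiPow, integrable_withDensity_iff_integrable_smul' (by fun_prop) (by simp)]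
  refine h.congr (Filter.Eventually.of_forall ?_)
  rintro ⟨x, hx⟩
  have hx' : (0 : ℝ) < x := hx
  simp only [Function.comp, Real.rpow_natCast, smul_eq_mul]
  rw [ENNReal.toReal_ofReal (by positivity)]
  ring

lemma aux_integral (n m : ℕ) (b : ℝ) (hb : 0 < b) :
    ∫ r : Set.Ioi (0 : ℝ), r.1 ^ m * Real.exp (-b * r.1 ^ 2) ∂(Measure.volumeIoiPow n)
      = b ^ (-((n : ℝ) + m + 1) / 2) * (1 / 2) * Real.Gamma (((n : ℝ) + m + 1) / 2) := by
  have h := integral_rpow_mul_exp_neg_mul_rpow (p := 2) (q := ((n + m : ℕ) : ℝ)) (by norm_num)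
    (lt_of_lt_of_le (by norm_num) (Nat.cast_nonneg _)) hb
  push_cast at h
  rw [← h]
  simp only [Measure.volumeIoiPow, ENNReal.ofReal]
  rw [integral_withDensity_eq_integral_smul
      ((measurable_subtype_coe.pow_const _).real_toNNReal),
    integral_subtype_comap measurableSet_Ioi
      fun a : ℝ ↦ Real.toNNReal (a ^ n) • (a ^ m * Real.exp (-b * a ^ 2))]
  refine setIntegral_congr_fun measurableSet_Ioi fun x hx ↦ ?_
  have hx' : (0 : ℝ) < x := hx
  simp only [NNReal.smul_def, smul_eq_mul]
  rw [Real.coe_toNNReal _ (by positivity), Real.rpow_add hx', Real.rpow_natCast,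
    Real.rpow_natCast, Real.rpow_two]
  ring

lemma aux_polar (n m : ℕ) (hn : 1 ≤ n) (f : (Fin n → ℝ) → ℝ)
    (g b : Metric.sphere (0 : Fin n → ℝ) 1 → ℝ) (hg : Continuous g) (hb : Continuous b)
    (hpos : ∀ s, 0 < b s)
    (hf : ∀ (s : Metric.sphere (0 : Fin n → ℝ) 1) (r : ℝ), 0 < r →
      f (r • s.1) = g s * (r ^ m * Real.exp (-b s * r ^ 2))) :
    ∫ x, f x = ∫ s, g s * (b s ^ (-((n : ℝ) + m) / 2) * (1 / 2) *
      Real.Gamma (((n : ℝ) + m) / 2)) ∂((volume : Measure (Fin n → ℝ)).toSphere) := by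
  have : Nonempty (Fin n) := ⟨⟨0, hn⟩⟩
  let μ : Measure (Fin n → ℝ) := volume
  let F : Metric.sphere (0 : Fin n → ℝ) 1 × Set.Ioi (0 : ℝ) → ℝ :=
    fun p => g p.1 * (p.2.1 ^ m * Real.exp (-b p.1 * p.2.1 ^ 2))
  have h1 : ∫ x, f x = ∫ x : ({(0)}ᶜ : Set (Fin n → ℝ)), f x.1 ∂(μ.comap (↑)) := by
    rw [integral_subtype_comap (measurableSet_singleton _).compl f,
        restrict_compl_singleton]
  have h2 : ∫ x : ({(0)}ᶜ : Set (Fin n → ℝ)), f x.1 ∂(μ.comap (↑))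
      = ∫ p, F p ∂(μ.toSphere.prod (.volumeIoiPow (Module.finrank ℝ (Fin n → ℝ) - 1))) := by
    rw [← μ.measurePreserving_homeomorphUnitSphereProd.integral_comp
        (Homeomorph.measurableEmbedding _)]
    refine integral_congr_ae (Filter.Eventually.of_forall fun x => ?_)
    have hx := (homeomorphUnitSphereProd (Fin n → ℝ)).symm_apply_apply x
    have hx2 := congrArg Subtype.val hx
    rw [homeomorphUnitSphereProd_symm_apply_coe] at hx2
    simp only [F]
    rw [← hf _ _ (homeomorphUnitSphereProd (Fin n → ℝ) x).2.2, hx2]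
  have hne : Nonempty (Metric.sphere (0 : Fin n → ℝ) 1) :=
    (NormedSpace.sphere_nonempty.mpr zero_le_one).to_subtype
  obtain ⟨s0, -, hs0⟩ := isCompact_univ.exists_isMinOn Set.univ_nonempty hb.continuousOn
  obtain ⟨s1, -, hs1⟩ := isCompact_univ.exists_isMaxOn Set.univ_nonempty hg.norm.continuousOn
  have hint : Integrable F
      (μ.toSphere.prod (.volumeIoiPow (Module.finrank ℝ (Fin n → ℝ) - 1))) := by
    have := ((aux_integrable (Module.finrank ℝ (Fin n → ℝ) - 1) m (b s0) (hpos s0)).comp_snd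
      μ.toSphere).const_mul ‖g s1‖
    refine this.mono' ?_ ?_
    · have : Continuous F := by fun_prop
      exact this.aestronglyMeasurable
    · refine Filter.Eventually.of_forall ?_
      rintro ⟨s, r, hr⟩
      have hr' : (0 : ℝ) < r := hr
      simp only [F, norm_mul, norm_pow, Real.norm_eq_abs, abs_of_pos hr', Real.abs_exp]
      have e1 : |g s| ≤ |g s1| := hs1 (Set.mem_univ s)
      have e0 : b s0 ≤ b s := hs0 (Set.mem_univ s)
      refine mul_le_mul e1 ?_ (by positivity) (abs_nonneg _)
      gcongr
  rw [h1, h2, integral_prod _ hint]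
  refine integral_congr_ae (Filter.Eventually.of_forall fun s => ?_)
  simp only [F]
  rw [integral_const_mul, aux_integral _ _ _ (hpos s)]
  have : ((Module.finrank ℝ (Fin n → ℝ) - 1 : ℕ) : ℝ) + m + 1 = n + m := by
    rw [Module.finrank_fin_fun, Nat.cast_sub hn]; push_cast; ring
  rw [this]

lemma aux_hom (n k : ℕ) (G : MvPolynomial (Fin n) ℝ) (hG : G.IsHomogeneous k)
    (r : ℝ) (x : Fin n → ℝ) :
    MvPolynomial.eval (r • x) G = r ^ k * MvPolynomial.eval x G := by
  rw [MvPolynomial.eval_eq, MvPolynomial.eval_eq, Finset.mul_sum]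
  refine Finset.sum_congr rfl fun d hd => ?_
  have h := hG.degree_eq_sum_deg_support hd
  simp only [Pi.smul_apply, smul_eq_mul, mul_pow, Finset.prod_mul_distrib]
  rw [Finset.prod_pow_eq_pow_sum]
  have : ∑ i ∈ d.support, d i = k := h.symm
  rw [this]; ring

/-- Lemma 2.2 of Kopp–Miller for a homogeneous polynomial `G` of degree `k`
and a positive definite symmetric matrix `B`. -/
theorem stmt_0 (n k : ℕ) (hn : 1 ≤ n) (hk : 1 ≤ k)
    (G : MvPolynomial (Fin n) ℝ) (hG : G.IsHomogeneous k)
    (B : Matrix (Fin n) (Fin n) ℝ) (hB : B.PosDef)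
    (α : ℝ) (hα : 0 < α) :
    (∫ x : Fin n → ℝ,
        (if x = 0 then (0 : ℝ) else
          MvPolynomial.eval x G * (x ⬝ᵥ B.mulVec x) ^ (-(k : ℝ) / 2)
            * Real.exp (-α * (x ⬝ᵥ B.mulVec x) / 4)))
      = (α / 4) ^ ((k : ℝ) / 2) * (Real.Gamma (n / 2) / Real.Gamma ((k + n) / 2)) *
        ∫ x : Fin n → ℝ, MvPolynomial.eval x G * Real.exp (-α * (x ⬝ᵥ B.mulVec x) / 4) := by
  have hq : ∀ s : Metric.sphere (0 : Fin n → ℝ) 1, 0 < s.1 ⬝ᵥ B.mulVec s.1 := by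
    intro s
    have := hB.dotProduct_mulVec_pos (x := s.1) (ne_zero_of_mem_unit_sphere s)
    simpa using this
  have hqs : ∀ (r : ℝ) (x : Fin n → ℝ),
      (r • x) ⬝ᵥ B.mulVec (r • x) = r ^ 2 * (x ⬝ᵥ B.mulVec x) := by
    intro r x
    rw [Matrix.mulVec_smul, smul_dotProduct, dotProduct_smul]
    simp only [smul_eq_mul]; ring
  have hcq : Continuous fun s : Metric.sphere (0 : Fin n → ℝ) 1 => s.1 ⬝ᵥ B.mulVec s.1 := by
    fun_prop
  have hcG : Continuous fun s : Metric.sphere (0 : Fin n → ℝ) 1 => MvPolynomial.eval s.1 G :=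
    (MvPolynomial.continuous_eval G).comp continuous_subtype_val
  rw [aux_polar n 0 hn _
      (fun s => MvPolynomial.eval s.1 G * (s.1 ⬝ᵥ B.mulVec s.1) ^ (-(k : ℝ) / 2))
      (fun s => α / 4 * (s.1 ⬝ᵥ B.mulVec s.1))
      (hcG.mul (hcq.rpow_const fun s => Or.inl (hq s).ne')) (by fun_prop)
      (fun s => by have := hq s; positivity) ?_,
    aux_polar n k hn _
      (fun s => MvPolynomial.eval s.1 G)
      (fun s => α / 4 * (s.1 ⬝ᵥ B.mulVec s.1)) hcG (by fun_prop)
      (fun s => by have := hq s; positivity) ?_, ← integral_const_mul]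
  · refine integral_congr_ae (Filter.Eventually.of_forall fun s => ?_)
    have hs := hq s
    have hΓ : Real.Gamma (((k : ℝ) + n) / 2) ≠ 0 := (Real.Gamma_pos_of_pos (by positivity)).ne'
    simp only [Nat.cast_zero, add_zero]
    rw [Real.mul_rpow (by positivity) hs.le, Real.mul_rpow (by positivity) hs.le,
      show -((n : ℝ) + k) / 2 = -(n : ℝ) / 2 + -(k : ℝ) / 2 by ring,
      Real.rpow_add (by positivity), Real.rpow_add hs, add_comm (n : ℝ) k]
    have h4 : (α / 4) ^ ((k : ℝ) / 2) * (α / 4) ^ (-(k : ℝ) / 2) = 1 := by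
      rw [← Real.rpow_add (by positivity), neg_div, add_neg_cancel, Real.rpow_zero]
    generalize (α / 4) ^ ((k : ℝ) / 2) = u at *
    generalize (α / 4) ^ (-(k : ℝ) / 2) = v at *
    generalize (α / 4) ^ (-(n : ℝ) / 2) = w at *
    field_simp
    linear_combination (-(MvPolynomial.eval s.1 G * w)) * h4
  · intro s r hr
    rw [aux_hom n k G hG, hqs]
    rw [show -α * (r ^ 2 * (s.1 ⬝ᵥ B.mulVec s.1)) / 4
      = -(α / 4 * (s.1 ⬝ᵥ B.mulVec s.1)) * r ^ 2 by ring]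
    ring
  · intro s r hr
    have hs := hq s
    rw [if_neg (smul_ne_zero hr.ne' (ne_zero_of_mem_unit_sphere s)), aux_hom n k G hG, hqs,
      Real.mul_rpow (by positivity) hs.le]
    rw [show -α * (r ^ 2 * (s.1 ⬝ᵥ B.mulVec s.1)) / 4
      = -(α / 4 * (s.1 ⬝ᵥ B.mulVec s.1)) * r ^ 2 by ring]
    have h5 : r ^ k * (r ^ 2) ^ (-(k : ℝ) / 2) = 1 := by
      rw [← Real.rpow_natCast r 2, ← Real.rpow_mul hr.le, ← Real.rpow_natCast r k,
        ← Real.rpow_add hr]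
      push_cast
      rw [show (k : ℝ) + 2 * (-(k : ℝ) / 2) = 0 by ring, Real.rpow_zero]
    generalize (r ^ 2) ^ (-(k : ℝ) / 2) = u at *
    linear_combination (MvPolynomial.eval s.1 G * (s.1 ⬝ᵥ B.mulVec s.1) ^ (-(k : ℝ) / 2) *
      Real.exp (-(α / 4 * (s.1 ⬝ᵥ B.mulVec s.1)) * r ^ 2)) * h5
end

section
/- Let n ≥ 1 be an integer, let k > 0 and α > 0 be real, and let G : ℝⁿ → ℝ be a continuous function that is positively homogeneous of degree k, i.e., G(c·x) = c^k·G(x) for all c > 0 and all x ∈ ℝⁿ. Then ∫_{ℝⁿ} (G(x)/‖x‖^k)·exp(−α‖x‖²/4) dx = (α/4)^{k/2} · Γ(n/2)/Γ((k+n)/2) · ∫_{ℝⁿ} G(x)·exp(−α‖x‖²/4) dx, where the integrand on the left is interpreted as 0 at x = 0, ‖·‖ is the Euclidean norm, and Γ denotes the Gamma function. -/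
open MeasureTheory Real
open scoped Classical

theorem polar_aux {E : Type*} [NormedAddCommGroup E] [NormedSpace ℝ E] [MeasurableSpace E]
    [Nontrivial E] (μ : Measure E) [FiniteDimensional ℝ E] [BorelSpace E] [μ.IsAddHaarMeasure]
    (F G : E → ℝ) (g : ℝ → ℝ) (h : ∀ x, x ≠ 0 → F x = G (‖x‖⁻¹ • x) * g ‖x‖) :
    ∫ x, F x ∂μ = (∫ s, G (s : Metric.sphere (0 : E) 1) ∂μ.toSphere) *
      ∫ y in Set.Ioi (0 : ℝ), y ^ (Module.finrank ℝ E - 1) * g y :=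
  calc
    ∫ x, F x ∂μ = ∫ x : ({(0)}ᶜ : Set E), F x.1 ∂(μ.comap (↑)) := by
      rw [integral_subtype_comap (measurableSet_singleton _).compl fun x ↦ F x,
        restrict_compl_singleton]
    _ = ∫ x : ({(0)}ᶜ : Set E), G (‖x.1‖⁻¹ • x.1) * g ‖x.1‖ ∂(μ.comap (↑)) := by
      congr 1
      ext x
      exact h x.1 x.2
    _ = ∫ x, G x.1 * g x.2 ∂μ.toSphere.prod (.volumeIoiPow (Module.finrank ℝ E - 1)) := by
      simpa using μ.measurePreserving_homeomorphUnitSphereProd.integral_comp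
        (Homeomorph.measurableEmbedding _)
        (fun p : Metric.sphere (0 : E) 1 × Set.Ioi (0 : ℝ) => G p.1 * g p.2)
    _ = (∫ s, G (s : Metric.sphere (0 : E) 1) ∂μ.toSphere) *
        ∫ x : Set.Ioi (0 : ℝ), g x ∂.volumeIoiPow (Module.finrank ℝ E - 1) :=
      integral_prod_mul (fun s : Metric.sphere (0 : E) 1 => G s) (fun x : Set.Ioi (0 : ℝ) => g x)
    _ = _ := by
      congr 1
      simp only [Measure.volumeIoiPow, ENNReal.ofReal]
      rw [integral_withDensity_eq_integral_smul,
        integral_subtype_comap measurableSet_Ioi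
          fun a ↦ Real.toNNReal (a ^ (Module.finrank ℝ E - 1)) • g a,
        setIntegral_congr_fun measurableSet_Ioi fun x hx ↦ ?_]
      · skip
        rw [NNReal.smul_def, Real.coe_toNNReal _ (pow_nonneg hx.out.le _), smul_eq_mul]
      · exact (measurable_subtype_coe.pow_const _).real_toNNReal

theorem radial_aux (n : ℕ) (hn : 1 ≤ n) (k α : ℝ) (hk : 0 ≤ k) (hα : 0 < α) :
    ∫ y in Set.Ioi (0 : ℝ), y ^ (n - 1) * (y ^ k * Real.exp (-α * y ^ 2 / 4)) =
      (α / 4) ^ (-(k + n) / 2) * (1 / 2) * Real.Gamma ((k + n) / 2) := by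
  have hn' : (1 : ℝ) ≤ n := by exact_mod_cast hn
  have h := integral_rpow_mul_exp_neg_mul_rpow (p := 2) (q := k + n - 1) (b := α / 4)
    (by norm_num) (by linarith) (by positivity)
  rw [sub_add_cancel] at h
  rw [← h]
  refine setIntegral_congr_fun measurableSet_Ioi fun y hy => ?_
  have hy : 0 < y := hy
  have e : k + n - 1 = ((n - 1 : ℕ) : ℝ) + k := by
    rw [Nat.cast_sub hn]; push_cast; ring
  rw [e, Real.rpow_add hy, Real.rpow_natCast, mul_assoc, Real.rpow_two]
  congr 3
  ring

/-- Lemma 2.2 of Kopp–Miller (case `B = I`) for a continuous positively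
homogeneous function `G` of real degree `k > 0`. -/
theorem stmt_1 (n : ℕ) (hn : 1 ≤ n) (k α : ℝ) (hk : 0 < k) (hα : 0 < α)
    (G : EuclideanSpace ℝ (Fin n) → ℝ) (hGcont : Continuous G)
    (hGhom : ∀ c : ℝ, 0 < c → ∀ x : EuclideanSpace ℝ (Fin n), G (c • x) = c ^ k * G x) :
    (∫ x : EuclideanSpace ℝ (Fin n),
        (if x = 0 then (0 : ℝ) else G x / ‖x‖ ^ k) * Real.exp (-α * ‖x‖ ^ 2 / 4))
      = (α / 4) ^ (k / 2) * (Real.Gamma (n / 2) / Real.Gamma ((k + n) / 2)) *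
        ∫ x : EuclideanSpace ℝ (Fin n), G x * Real.exp (-α * ‖x‖ ^ 2 / 4) := by
  have hn' : (1 : ℝ) ≤ n := by exact_mod_cast hn
  haveI : Nonempty (Fin n) := ⟨⟨0, hn⟩⟩
  haveI : Nontrivial (EuclideanSpace ℝ (Fin n)) := by
    apply Module.nontrivial_of_finrank_pos (R := ℝ)
    rw [finrank_euclideanSpace_fin]; exact hn
  have hG : ∀ x : EuclideanSpace ℝ (Fin n), x ≠ 0 → G (‖x‖⁻¹ • x) = G x / ‖x‖ ^ k := by
    intro x hx
    have hx' := norm_pos_iff.2 hx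
    rw [hGhom _ (inv_pos.2 hx'), Real.inv_rpow hx'.le]
    ring
  rw [polar_aux volume _ G (fun y => y ^ (0 : ℝ) * Real.exp (-α * y ^ 2 / 4)) (by
      intro x hx
      simp only [if_neg hx, hG x hx, Real.rpow_zero, one_mul]),
    polar_aux volume (fun x => G x * Real.exp (-α * ‖x‖ ^ 2 / 4)) G
      (fun y => y ^ k * Real.exp (-α * y ^ 2 / 4)) (by
      intro x hx
      have hx' := Real.rpow_pos_of_pos (norm_pos_iff.2 hx) k
      simp only [hG x hx]
      field_simp)]
  simp only [finrank_euclideanSpace_fin]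
  rw [radial_aux n hn 0 α le_rfl hα, radial_aux n hn k α hk.le hα]
  have hΓ : Real.Gamma ((k + n) / 2) ≠ 0 := (Real.Gamma_pos_of_pos (by positivity)).ne'
  have e : (α / 4) ^ (-(0 + n : ℝ) / 2) = (α / 4) ^ (k / 2) * (α / 4) ^ (-(k + n) / 2) := by
    rw [← Real.rpow_add (by positivity)]
    congr 1
    ring
  rw [e, zero_add]
  field_simp
end

section
/- Let N ≥ 1 and k ≥ 1 be integers, set n = N(N+1)/2, and let q > 0 and r > 0 be real. Let L : ℝⁿ → M_N(ℝ) be a linear map such that for every x ∈ ℝⁿ, L(x) is a symmetric matrix and Tr(L(x)²) = ‖x‖². Then ∫_{ℝⁿ} Tr((L(x))^k)·(r/‖x‖)^k·exp(−q‖x‖²/4) dx = (q r²/4)^{k/2} · Γ(n/2)/Γ((k+n)/2) · ∫_{ℝⁿ} Tr((L(x))^k)·exp(−q‖x‖²/4) dx, where the integrand on the left is interpreted as 0 at x = 0. (This is the relation m_k(SOE) = (q r²/4)^{k/2}·Γ(n/2)/Γ((k+n)/2)·m_k(GOE) between the k-th spectral moments of the spherical orthogonal ensemble of radius r and the Gaussian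 orthogonal ensemble, expressed through an isometric linear parametrization L of the real symmetric matrices by ℝⁿ; note n = dim_ℝ of the space of N×N real symmetric matrices.) -/
open MeasureTheory Real Matrix
open scoped Classical

lemma aux_polar_s4 {E : Type*} [NormedAddCommGroup E] [NormedSpace ℝ E] [Nontrivial E]
    [FiniteDimensional ℝ E] [MeasurableSpace E] [BorelSpace E] (μ : Measure E)
    [μ.IsAddHaarMeasure] (P : E → ℝ) (k : ℕ)
    (hP : ∀ (t : ℝ) x, P (t • x) = t ^ k * P x) (g : ℝ → ℝ) :
    ∫ x, P x * g ‖x‖ ∂μ = (∫ s, P (s : Metric.sphere (0:E) 1).1 ∂μ.toSphere) *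
      ∫ y in Set.Ioi (0:ℝ), y ^ (Module.finrank ℝ E - 1) * (y ^ k * g y) :=
  calc
    ∫ x, P x * g ‖x‖ ∂μ = ∫ x : ({(0)}ᶜ : Set E), P x.1 * g (‖x.1‖) ∂(μ.comap (↑)) := by
      rw [integral_subtype_comap (measurableSet_singleton _).compl fun x ↦ P x * g (‖x‖),
        MeasureTheory.restrict_compl_singleton]
    _ = ∫ x, P x.1.1 * (x.2.1 ^ k * g x.2.1)
          ∂μ.toSphere.prod (.volumeIoiPow (Module.finrank ℝ E - 1)) := by
      rw [← μ.measurePreserving_homeomorphUnitSphereProd.integral_comp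
        (Homeomorph.measurableEmbedding _)]
      refine integral_congr_ae (.of_forall fun x => ?_)
      have hx : ‖x.1‖ ≠ 0 := norm_ne_zero_iff.2 x.2
      simp only [homeomorphUnitSphereProd_apply_snd_coe, homeomorphUnitSphereProd_apply_fst_coe,
        hP, inv_pow]
      field_simp
    _ = (∫ s, P (s : Metric.sphere (0:E) 1).1 ∂μ.toSphere) *
        ∫ x : Set.Ioi (0 : ℝ), (x.1 ^ k * g x.1) ∂.volumeIoiPow (Module.finrank ℝ E - 1) :=
      integral_prod_mul (fun s : Metric.sphere (0:E) 1 => P s.1)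
        (fun x : Set.Ioi (0:ℝ) => x.1 ^ k * g x.1)
    _ = _ := by
      congr 1
      simp only [Measure.volumeIoiPow, ENNReal.ofReal]
      rw [integral_withDensity_eq_integral_smul,
        integral_subtype_comap measurableSet_Ioi
          fun a ↦ Real.toNNReal (a ^ (Module.finrank ℝ E - 1)) • (a ^ k * g a),
        setIntegral_congr_fun measurableSet_Ioi fun x hx ↦ ?_]
      · rw [NNReal.smul_def, Real.coe_toNNReal _ (pow_nonneg hx.out.le _), smul_eq_mul]
      · exact (measurable_subtype_coe.pow_const _).real_toNNReal

lemma aux_gamma (m : ℕ) (hm : 1 ≤ m) (b : ℝ) (hb : 0 < b) :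
    ∫ y in Set.Ioi (0:ℝ), y ^ (m - 1) * Real.exp (-b * y ^ 2) =
      b ^ (-(m:ℝ) / 2) * (1 / 2) * Real.Gamma (m / 2) := by
  have hm' : (1:ℝ) ≤ m := by exact_mod_cast hm
  have h := integral_rpow_mul_exp_neg_mul_rpow (p := 2) (q := (m:ℝ) - 1) (b := b)
    two_pos (by linarith) hb
  rw [sub_add_cancel] at h
  rw [← h]
  refine setIntegral_congr_fun measurableSet_Ioi fun y hy => ?_
  have : (m:ℝ) - 1 = ((m - 1 : ℕ) : ℝ) := by push_cast [hm]; ring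
  simp only [this, Real.rpow_natCast, Real.rpow_two]

/-- The relation `m_k(SOE) = (qr²/4)^{k/2} Γ(n/2)/Γ((k+n)/2) m_k(GOE)`
expressed through an isometric linear parametrization `L` of the `N × N` real symmetric
matrices by `ℝⁿ`, `n = N(N+1)/2`. -/
theorem stmt_4 (N k n : ℕ) (hN : 1 ≤ N) (hk : 1 ≤ k) (hn : n = N * (N + 1) / 2)
    (q r : ℝ) (hq : 0 < q) (hr : 0 < r)
    (L : EuclideanSpace ℝ (Fin n) →ₗ[ℝ] Matrix (Fin N) (Fin N) ℝ)
    (hsymm : ∀ x, (L x).IsSymm)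
    (hiso : ∀ x : EuclideanSpace ℝ (Fin n), Matrix.trace ((L x) ^ 2) = ‖x‖ ^ 2) :
    (∫ x : EuclideanSpace ℝ (Fin n),
        (if x = 0 then (0 : ℝ) else Matrix.trace ((L x) ^ k) * (r / ‖x‖) ^ k)
          * Real.exp (-q * ‖x‖ ^ 2 / 4))
      = (q * r ^ 2 / 4) ^ ((k : ℝ) / 2) * (Real.Gamma (n / 2) / Real.Gamma ((k + n) / 2)) *
        ∫ x : EuclideanSpace ℝ (Fin n),
          Matrix.trace ((L x) ^ k) * Real.exp (-q * ‖x‖ ^ 2 / 4) := by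
  have hn1 : 1 ≤ n := by
    rw [hn, Nat.le_div_iff_mul_le two_pos]
    nlinarith
  haveI : NeZero n := ⟨by omega⟩
  haveI : Nontrivial (EuclideanSpace ℝ (Fin n)) :=
    Module.nontrivial_of_finrank_pos (R := ℝ) (by rw [finrank_euclideanSpace_fin]; omega)
  have hP : ∀ (t : ℝ) x, Matrix.trace ((L (t • x)) ^ k) = t ^ k * Matrix.trace ((L x) ^ k) := by
    intro t x
    rw [map_smul, smul_pow, Matrix.trace_smul, smul_eq_mul]
  have hb : 0 < q / 4 := by positivity
  have e1 := aux_polar_s4 (volume : Measure (EuclideanSpace ℝ (Fin n)))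
    (fun x => Matrix.trace ((L x) ^ k)) k hP (fun y => (r / y) ^ k * Real.exp (-q * y ^ 2 / 4))
  have e2 := aux_polar_s4 (volume : Measure (EuclideanSpace ℝ (Fin n)))
    (fun x => Matrix.trace ((L x) ^ k)) k hP (fun y => Real.exp (-q * y ^ 2 / 4))
  have i1 : ∫ y in Set.Ioi (0:ℝ), y ^ (n - 1) *
      (y ^ k * ((r / y) ^ k * Real.exp (-q * y ^ 2 / 4))) =
      r ^ k * ((q / 4) ^ (-(n:ℝ) / 2) * (1 / 2) * Real.Gamma (n / 2)) := by
    rw [← aux_gamma n hn1 _ hb, ← integral_const_mul]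
    refine setIntegral_congr_fun measurableSet_Ioi fun y hy => ?_
    have hy' : y ≠ 0 := ne_of_gt hy
    have : -q * y ^ 2 / 4 = -(q / 4) * y ^ 2 := by ring
    simp only [this, div_pow r]
    field_simp
  have i2 : ∫ y in Set.Ioi (0:ℝ), y ^ (n - 1) * (y ^ k * Real.exp (-q * y ^ 2 / 4)) =
      (q / 4) ^ (-((k:ℝ) + n) / 2) * (1 / 2) * Real.Gamma ((k + n) / 2) := by
    have := aux_gamma (k + n) (by omega) _ hb
    push_cast at this
    rw [← this]
    refine setIntegral_congr_fun measurableSet_Ioi fun y hy => ?_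
    have : -q * y ^ 2 / 4 = -(q / 4) * y ^ 2 := by ring
    have h2 : k + n - 1 = (n - 1) + k := by omega
    simp only [this, h2, pow_add, mul_assoc]
  rw [finrank_euclideanSpace_fin] at e1 e2
  rw [i1] at e1
  rw [i2] at e2
  rw [e2]
  have e0 : (∫ x : EuclideanSpace ℝ (Fin n),
        (if x = 0 then (0 : ℝ) else Matrix.trace ((L x) ^ k) * (r / ‖x‖) ^ k)
          * Real.exp (-q * ‖x‖ ^ 2 / 4)) = ∫ x : EuclideanSpace ℝ (Fin n),
        Matrix.trace ((L x) ^ k) * ((r / ‖x‖) ^ k * Real.exp (-q * ‖x‖ ^ 2 / 4)) := by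
    refine integral_congr_ae (.of_forall fun x => ?_)
    have hk0 : k ≠ 0 := by omega
    by_cases hx : x = 0
    · simp [hx, hk0]
    · simp [hx, mul_assoc]
  rw [e0, e1]
  have hG : Real.Gamma (((k:ℝ) + n) / 2) ≠ 0 := by
    have : (0:ℝ) < n := by exact_mod_cast hn1
    exact (Real.Gamma_pos_of_pos (by positivity)).ne'
  have h1 : (q * r ^ 2 / 4) ^ ((k : ℝ) / 2) = (q / 4) ^ ((k:ℝ) / 2) * r ^ k := by
    rw [show q * r ^ 2 / 4 = (q / 4) * r ^ 2 by ring, Real.mul_rpow hb.le (by positivity),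
      ← Real.rpow_natCast r 2, ← Real.rpow_mul hr.le, ← Real.rpow_natCast r k]
    congr 2
    push_cast
    ring
  have h2 : (q / 4) ^ (-(n:ℝ) / 2) = (q / 4) ^ ((k:ℝ) / 2) * (q / 4) ^ (-((k:ℝ) + n) / 2) := by
    rw [← Real.rpow_add hb]
    congr 1
    ring
  rw [h1, h2]
  field_simp
end

section
/- Let N ≥ 1 and k ≥ 1 be integers, set n = N², and let q > 0 and r > 0 be real. Let L : ℝⁿ → M_N(ℂ) be an ℝ-linear map such that for every x ∈ ℝⁿ, L(x) is a Hermitian matrix and Tr(L(x)²) = ‖x‖². Then ∫_{ℝⁿ} Re Tr((L(x))^k)·(r/‖x‖)^k·exp(−q‖x‖²/2) dx = (q r²/2)^{k/2} · Γ(n/2)/Γ((k+n)/2) · ∫_{ℝⁿ} Re Tr((L(x))^k)·exp(−q‖x‖²/2) dx, where the integrand on the left is interpreted as 0 at x = 0. (This is the relation m_k(SUE) = (q r²/2)^{k/2}·Γ(n/2)/Γ((k+n)/2)·m_k(GUE) between the k-th spectral moments of the spherical unitary ensemble of radius r and the Gaussian unitary ensemble, expressed through an isometric ℝ-linear parametrization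 L of the N×N Hermitian matrices by ℝⁿ; note n = N² is the real dimension of the space of N×N Hermitian matrices.) -/
open MeasureTheory Real Matrix
open scoped Classical

lemma polar_aux_s5 {n : ℕ} (F g : EuclideanSpace ℝ (Fin n) → ℝ) (h : ℝ → ℝ)
    (hn : 1 ≤ n)
    (hF : ∀ x, x ≠ 0 → F x = g (‖x‖⁻¹ • x) * h ‖x‖) :
    ∫ x, F x = (∫ s : Metric.sphere (0 : EuclideanSpace ℝ (Fin n)) 1, g s
        ∂(volume : Measure (EuclideanSpace ℝ (Fin n))).toSphere)
      * ∫ y in Set.Ioi (0 : ℝ), y ^ (n - 1) * h y := by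
  have : Nonempty (Fin n) := ⟨⟨0, hn⟩⟩
  calc
    ∫ x, F x = ∫ x : ({(0)}ᶜ : Set (EuclideanSpace ℝ (Fin n))), F x ∂((volume : Measure (EuclideanSpace ℝ (Fin n))).comap (Subtype.val)) := by
      rw [integral_subtype_comap (measurableSet_singleton _).compl F,
        restrict_compl_singleton]
    _ = ∫ x : ({(0)}ᶜ : Set (EuclideanSpace ℝ (Fin n))),
          g (homeomorphUnitSphereProd _ x).1 * h (homeomorphUnitSphereProd _ x).2
            ∂((volume : Measure (EuclideanSpace ℝ (Fin n))).comap (Subtype.val)) := by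
      congr 1
      ext x
      rw [hF x x.2]
      simp
    _ = ∫ x : Metric.sphere (0 : EuclideanSpace ℝ (Fin n)) 1 × Set.Ioi (0 : ℝ), g x.1 * h x.2
        ∂(volume : Measure (EuclideanSpace ℝ (Fin n))).toSphere.prod
          (.volumeIoiPow (Module.finrank ℝ (EuclideanSpace ℝ (Fin n)) - 1)) :=
      (volume : Measure (EuclideanSpace ℝ (Fin n))).measurePreserving_homeomorphUnitSphereProd.integral_comp
        (Homeomorph.measurableEmbedding _) (fun x => g x.1 * h x.2)
    _ = _ := by
      rw [integral_prod_mul (fun s : Metric.sphere (0 : EuclideanSpace ℝ (Fin n)) 1 => g s)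
        (fun y : Set.Ioi (0 : ℝ) => h y)]
      congr 1
      rw [finrank_euclideanSpace_fin, Measure.volumeIoiPow,
        integral_withDensity_eq_integral_toReal_smul (by fun_prop) (by simp),
        ← integral_subtype_comap measurableSet_Ioi (fun y : ℝ => y ^ (n - 1) * h y)]
      refine integral_congr_ae (.of_forall fun y => ?_)
      have : (0 : ℝ) ≤ y.1 ^ (n - 1) := pow_nonneg (le_of_lt y.2) _
      simp [ENNReal.toReal_ofReal this]

lemma gamma_aux (m : ℕ) (q : ℝ) (hq : 0 < q) :
    ∫ y in Set.Ioi (0 : ℝ), y ^ m * Real.exp (-q * y ^ 2 / 2)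
      = (q / 2) ^ (-((m : ℝ) + 1) / 2) * (1 / 2) * Real.Gamma (((m : ℝ) + 1) / 2) := by
  rw [← integral_rpow_mul_exp_neg_mul_rpow (p := 2) (q := m) (b := q / 2) (by norm_num)
    (by have : (0 : ℝ) ≤ m := m.cast_nonneg
        linarith) (by positivity)]
  refine integral_congr_ae (.of_forall fun y => ?_)
  simp only [Real.rpow_natCast, Real.rpow_two]
  congr 2
  ring

/-- The relation `m_k(SUE) = (qr²/2)^{k/2} Γ(n/2)/Γ((k+n)/2) m_k(GUE)`
expressed through an isometric ℝ-linear parametrization `L` of the `N × N` Hermitian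
matrices by `ℝⁿ`, `n = N²`. -/
theorem stmt_5 (N k n : ℕ) (hN : 1 ≤ N) (hk : 1 ≤ k) (hn : n = N ^ 2)
    (q r : ℝ) (hq : 0 < q) (hr : 0 < r)
    (L : EuclideanSpace ℝ (Fin n) →ₗ[ℝ] Matrix (Fin N) (Fin N) ℂ)
    (hherm : ∀ x, (L x).IsHermitian)
    (hiso : ∀ x : EuclideanSpace ℝ (Fin n), Matrix.trace ((L x) ^ 2) = ((‖x‖ ^ 2 : ℝ) : ℂ)) :
    (∫ x : EuclideanSpace ℝ (Fin n),
        (if x = 0 then (0 : ℝ) else (Matrix.trace ((L x) ^ k)).re * (r / ‖x‖) ^ k)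
          * Real.exp (-q * ‖x‖ ^ 2 / 2))
      = (q * r ^ 2 / 2) ^ ((k : ℝ) / 2) * (Real.Gamma (n / 2) / Real.Gamma ((k + n) / 2)) *
        ∫ x : EuclideanSpace ℝ (Fin n),
          (Matrix.trace ((L x) ^ k)).re * Real.exp (-q * ‖x‖ ^ 2 / 2) := by
  have hn1 : 1 ≤ n := by rw [hn]; exact Nat.one_le_pow _ _ hN
  have hom : ∀ (c : ℝ) x, (Matrix.trace ((L (c • x)) ^ k)).re
      = c ^ k * (Matrix.trace ((L x) ^ k)).re := by
    intro c x
    rw [map_smul, smul_pow, Matrix.trace_smul, Complex.smul_re, smul_eq_mul]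
  rw [polar_aux_s5 _ (fun x => (Matrix.trace ((L x) ^ k)).re)
      (fun y => r ^ k * Real.exp (-q * y ^ 2 / 2)) hn1 ?_,
    polar_aux_s5 _ (fun x => (Matrix.trace ((L x) ^ k)).re)
      (fun y => y ^ k * Real.exp (-q * y ^ 2 / 2)) hn1 ?_]
  · have e1 : ∫ y in Set.Ioi (0 : ℝ), y ^ (n - 1) * (r ^ k * Real.exp (-q * y ^ 2 / 2))
        = r ^ k * ((q / 2) ^ (-(n : ℝ) / 2) * (1 / 2) * Real.Gamma ((n : ℝ) / 2)) := by
      have := gamma_aux (n - 1) q hq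
      rw [Nat.cast_sub hn1] at this
      simp only [Nat.cast_one, sub_add_cancel] at this
      rw [← this, ← integral_const_mul]
      congr 1
      ext y
      ring
    have e2 : ∫ y in Set.Ioi (0 : ℝ), y ^ (n - 1) * (y ^ k * Real.exp (-q * y ^ 2 / 2))
        = (q / 2) ^ (-((k : ℝ) + n) / 2) * (1 / 2) * Real.Gamma (((k : ℝ) + n) / 2) := by
      have := gamma_aux (k + (n - 1)) q hq
      rw [Nat.cast_add, Nat.cast_sub hn1] at this
      simp only [Nat.cast_one, add_assoc, sub_add_cancel] at this
      rw [← this]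
      congr 1
      ext y
      ring
    rw [e1, e2]
    have hG : Real.Gamma (((k : ℝ) + n) / 2) ≠ 0 := by
      apply ne_of_gt
      apply Real.Gamma_pos_of_pos
      positivity
    have e3 : (q * r ^ 2 / 2) ^ ((k : ℝ) / 2) = (q / 2) ^ ((k : ℝ) / 2) * r ^ k := by
      rw [show q * r ^ 2 / 2 = (q / 2) * r ^ 2 by ring,
        Real.mul_rpow (by positivity) (by positivity), ← Real.rpow_natCast r 2,
        ← Real.rpow_mul hr.le, ← Real.rpow_natCast r k]
      congr 2
      push_cast
      ring
    have e4 : (q / 2) ^ (-(n : ℝ) / 2)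
        = (q / 2) ^ ((k : ℝ) / 2) * (q / 2) ^ (-((k : ℝ) + n) / 2) := by
      rw [← Real.rpow_add (by positivity)]
      congr 1
      ring
    rw [e3, e4]
    field_simp
  · intro x hx
    have : ‖x‖ ≠ 0 := norm_ne_zero_iff.mpr hx
    simp only [hom, inv_pow]
    field_simp
  · intro x hx
    have : ‖x‖ ≠ 0 := norm_ne_zero_iff.mpr hx
    simp only [hom, if_neg hx, inv_pow, div_pow]
    field_simp
end

section
/- Let α > 5/2 be real, let w(t) = ∑_{ℓ=0}^∞ (Γ(α)/(Γ(α+ℓ)·ℓ!))·(−t²/4)^ℓ = ₀F₁(α; −t²/4), and define ŵ : ℝ → ℝ by ŵ(x) = (1/(2π))·∫_ℝ cos(t·x)·w(t) dt. Then for every x ∈ ℝ with x ≠ 1 and x ≠ −1, ŵ is differentiable at x and (1 − x²)·ŵ'(x) + (2α − 3)·x·ŵ(x) = 0. -/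
open Real MeasureTheory

lemma contA {b : ℝ} (hb : 0 ≤ b) : Continuous (fun s : ℝ => (1 - s^2)^b) :=
  Continuous.rpow_const (by fun_prop) (fun _ => Or.inr hb)

lemma derivA (b s : ℝ) (hs : s ∈ Set.Ioo (-1:ℝ) 1) :
    HasDerivAt (fun s : ℝ => (1 - s^2)^b) (-(2*b*s*(1-s^2)^(b-1))) s := by
  have h0 : (0:ℝ) < 1 - s^2 := by nlinarith [hs.1, hs.2]
  have h1 : HasDerivAt (fun s : ℝ => 1 - s^2) (-(2*s)) s := by
    simpa using (hasDerivAt_pow 2 s).const_sub 1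
  have := h1.rpow_const (p := b) (Or.inl h0.ne')
  convert this using 1; ring

lemma intP {b : ℝ} (hb : 0 < b) :
    IntervalIntegrable (fun s : ℝ => s * (1-s^2)^(b-1)) volume (-1) 1 := by
  have hc := contA hb.le
  have e : ∀ s : ℝ, s * (1-s^2)^(b-1) = (-(2*b))⁻¹ * (-(2*b*s*(1-s^2)^(b-1))) := by
    intro s; field_simp
  have H1 : IntervalIntegrable (fun s : ℝ => (2*b*s*(1-s^2)^(b-1))) volume 0 1 := by
    apply intervalIntegral.intervalIntegrable_deriv_of_nonneg (g := fun s : ℝ => -(1 - s^2)^b)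
    · exact hc.neg.continuousOn
    · intro x hx
      simp only [zero_le_one, inf_of_le_left, sup_of_le_right] at hx
      exact (derivA b x ⟨by linarith [hx.1], hx.2⟩).fun_neg.congr_deriv (neg_neg _)
    · intro x hx
      simp only [zero_le_one, inf_of_le_left, sup_of_le_right] at hx
      have : (0:ℝ) ≤ 1 - x^2 := by nlinarith [hx.1, hx.2]
      have := Real.rpow_nonneg this (b-1)
      have := hx.1
      positivity
  have H2 : IntervalIntegrable (fun s : ℝ => -(2*b*s*(1-s^2)^(b-1))) volume (-1) 0 := by
    apply intervalIntegral.intervalIntegrable_deriv_of_nonneg (g := fun s : ℝ => (1 - s^2)^b)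
    · exact hc.continuousOn
    · intro x hx
      simp only [min_eq_left (show (-1:ℝ) ≤ 0 by norm_num), max_eq_right (show (-1:ℝ) ≤ 0 by norm_num)] at hx
      simpa using (derivA b x ⟨by linarith [hx.1], by linarith [hx.2]⟩)
    · intro x hx
      simp only [min_eq_left (show (-1:ℝ) ≤ 0 by norm_num), max_eq_right (show (-1:ℝ) ≤ 0 by norm_num)] at hx
      have : (0:ℝ) ≤ 1 - x^2 := by nlinarith [hx.1, hx.2]
      have := Real.rpow_nonneg this (b-1)
      have h2 : 0 ≤ -x := by linarith [hx.2]
      have : 0 ≤ 2*b*(-x)*(1-x^2)^(b-1) := by positivity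
      linarith
  have H2' : IntervalIntegrable (fun s : ℝ => (2*b*s*(1-s^2)^(b-1))) volume (-1) 0 := by
    refine H2.neg.congr fun x _ => ?_
    simp
  have H := (H2'.trans H1).const_mul (2*b)⁻¹
  refine H.congr fun x _ => ?_
  field_simp

lemma decay {b : ℝ} (hb : 1 < b) : ∃ C, ∀ t : ℝ,
    |∫ s in (-1:ℝ)..1, Real.cos (t*s) * (1-s^2)^b| ≤ C * (1+t^2)⁻¹ := by
  have hcA := contA (b := b) (by linarith)
  have hcP := contA (b := b-1) (by linarith)
  have hI := intP (b := b-1) (by linarith)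
  have one : ∀ t : ℝ, t * (∫ s in (-1:ℝ)..1, Real.cos (t*s) * (1-s^2)^b)
      = 2*b*∫ s in (-1:ℝ)..1, Real.sin (t*s) * (s * (1-s^2)^(b-1)) := by
    intro t
    have := intervalIntegral.integral_eq_sub_of_hasDerivAt_of_le (a := -1) (b := 1)
      (f := fun s : ℝ => Real.sin (t*s) * (1-s^2)^b)
      (f' := fun s => t * (Real.cos (t*s) * (1-s^2)^b)
         - 2*b*(Real.sin (t*s) * (s * (1-s^2)^(b-1)))) (by norm_num)
      (Continuous.continuousOn (by fun_prop)) (by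
        intro x hx
        have h1 : HasDerivAt (fun s : ℝ => Real.sin (t*s)) (Real.cos (t*x) * t) x := by
          simpa using ((hasDerivAt_id x).const_mul t).sin
        refine (h1.fun_mul (derivA b x hx)).congr_deriv ?_
        ring) (Continuous.intervalIntegrable (by fun_prop) _ _)
    rw [intervalIntegral.integral_sub, intervalIntegral.integral_const_mul,
      intervalIntegral.integral_const_mul] at this
    · have h0 : (0:ℝ)^b = 0 := Real.zero_rpow (by linarith)
      simp [h0] at this
      linarith
    all_goals exact Continuous.intervalIntegrable (by fun_prop) _ _
  set Q : ℝ → ℝ := fun s => (1-s^2)^(b-1) - 2*(b-1)*(s*(s*(1-s^2)^(b-1-1))) with hQ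
  have hQi : IntervalIntegrable Q volume (-1) 1 := by
    refine (hcP.intervalIntegrable _ _).sub (IntervalIntegrable.const_mul ?_ _)
    exact hI.continuousOn_mul continuousOn_id
  have two : ∀ t : ℝ, t * (∫ s in (-1:ℝ)..1, Real.sin (t*s) * (s * (1-s^2)^(b-1)))
      = ∫ s in (-1:ℝ)..1, Real.cos (t*s) * Q s := by
    intro t
    have hci : IntervalIntegrable (fun s => Real.cos (t*s) * Q s) volume (-1) 1 :=
      hQi.continuousOn_mul (Continuous.continuousOn (by fun_prop))
    have hsi : IntervalIntegrable (fun s => t * (Real.sin (t*s) * (s * (1-s^2)^(b-1)))) volume (-1) 1 :=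
      Continuous.intervalIntegrable (by fun_prop) _ _
    have := intervalIntegral.integral_eq_sub_of_hasDerivAt_of_le (a := -1) (b := 1)
      (f := fun s : ℝ => Real.cos (t*s) * (s * (1-s^2)^(b-1)))
      (f' := fun s => Real.cos (t*s) * Q s - t * (Real.sin (t*s) * (s * (1-s^2)^(b-1)))) (by norm_num)
      (Continuous.continuousOn (by fun_prop)) (by
        intro x hx
        have h1 : HasDerivAt (fun s : ℝ => Real.cos (t*s)) (-Real.sin (t*x) * t) x := by
          simpa using ((hasDerivAt_id x).const_mul t).cos
        refine (h1.fun_mul ((hasDerivAt_id' x).fun_mul (derivA (b-1) x hx))).congr_deriv ?_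
        simp only [hQ]; ring) (hci.sub hsi)
    rw [intervalIntegral.integral_sub hci hsi, intervalIntegral.integral_const_mul] at this
    have h0 : (0:ℝ)^(b-1) = 0 := Real.zero_rpow (by linarith)
    simp [h0] at this
    linarith
  have bd : ∀ (f : ℝ → ℝ), IntervalIntegrable f volume (-1) 1 → ∀ t : ℝ,
      |∫ s in (-1:ℝ)..1, Real.cos (t*s) * f s| ≤ ∫ s in (-1:ℝ)..1, |f s| := by
    intro f hf t
    rw [← Real.norm_eq_abs]
    refine intervalIntegral.norm_integral_le_of_norm_le (by norm_num) ?_ hf.abs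
    refine Filter.Eventually.of_forall fun x _ => ?_
    rw [Real.norm_eq_abs, abs_mul]
    exact mul_le_of_le_one_left (abs_nonneg _) (Real.abs_cos_le_one _)
  refine ⟨(∫ s in (-1:ℝ)..1, |(1-s^2)^b|) + 2*b*∫ s in (-1:ℝ)..1, |Q s|, fun t => ?_⟩
  have b1 := bd _ (hcA.intervalIntegrable _ _) t
  have b2 := bd _ hQi t
  rw [← div_eq_mul_inv, le_div_iff₀ (by positivity)]
  have e : t^2 * (∫ s in (-1:ℝ)..1, Real.cos (t*s) * (1-s^2)^b)
      = 2*b*∫ s in (-1:ℝ)..1, Real.cos (t*s) * Q s := by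
    rw [← two, pow_two, mul_assoc, one]; ring
  have e2 := congrArg abs e
  rw [abs_mul, abs_mul, abs_of_nonneg (sq_nonneg t), abs_of_pos (show 0 < 2*b by linarith)] at e2
  have : 2*b*|∫ s in (-1:ℝ)..1, Real.cos (t*s) * Q s| ≤ 2*b*∫ s in (-1:ℝ)..1, |Q s| :=
    mul_le_mul_of_nonneg_left b2 (by linarith)
  linarith

lemma mom {b : ℝ} (hb : 0 < b) (l : ℕ) :
    (l + b + 3/2) * (∫ s in (-1:ℝ)..1, s^(2*(l+1)) * (1-s^2)^b)
     = (l + 1/2) * ∫ s in (-1:ℝ)..1, s^(2*l) * (1-s^2)^b := by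
  have hcA := contA (b := b) (by linarith)
  have hcP := contA (b := b+1) (by linarith)
  have := intervalIntegral.integral_eq_sub_of_hasDerivAt_of_le (a := -1) (b := 1)
      (f := fun s : ℝ => s^(2*l+1) * (1-s^2)^(b+1))
      (f' := fun s => (2*l+1) * (s^(2*l) * (1-s^2)^b) -
         (2*l+1+2*b+2) * (s^(2*(l+1)) * (1-s^2)^b)) (by norm_num)
      (Continuous.continuousOn (by fun_prop)) (by
        intro x hx
        have h0 : (0:ℝ) < 1 - x^2 := by nlinarith [hx.1, hx.2]
        refine ((hasDerivAt_pow (2*l+1) x).fun_mul (derivA (b+1) x hx)).congr_deriv ?_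
        rw [Real.rpow_add_one h0.ne']
        push_cast
        simp
        ring) (Continuous.intervalIntegrable (by fun_prop) _ _)
  rw [intervalIntegral.integral_sub, intervalIntegral.integral_const_mul,
      intervalIntegral.integral_const_mul] at this
  · have h0 : (0:ℝ)^(b+1) = 0 := Real.zero_rpow (by linarith)
    simp [h0] at this
    linarith
  all_goals exact Continuous.intervalIntegrable (by fun_prop) _ _

lemma mom2 {b : ℝ} (hb : 0 < b) (l : ℕ) :
    (∫ s in (-1:ℝ)..1, s^(2*l) * (1-s^2)^b) / (Nat.factorial (2*l) : ℝ)
     = (∫ s in (-1:ℝ)..1, (1-s^2)^b) * (Real.Gamma (b+3/2) / (Real.Gamma (b+3/2 + l) * (Nat.factorial l : ℝ))) / 4^l := by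
  induction l with
  | zero =>
    have := (Real.Gamma_pos_of_pos (show 0 < b+3/2 by linarith)).ne'
    simp; field_simp
  | succ l ih =>
    have h := mom hb l
    have g := Real.Gamma_add_one (s := b+3/2+l) (by positivity)
    have g0 := (Real.Gamma_pos_of_pos (show 0 < b+3/2+l by positivity)).ne'
    have e : b + 3/2 + ((l+1 : ℕ):ℝ) = b+3/2+l+1 := by push_cast; ring
    rw [e, g]
    have hp : (0:ℝ) < l+b+3/2 := by positivity
    have hp' : (0:ℝ) < b+3/2+l := by positivity
    have h' : (∫ s in (-1:ℝ)..1, s^(2*(l+1)) * (1-s^2)^b) = (l + 1/2) / (l+b+3/2) * ∫ s in (-1:ℝ)..1, s^(2*l) * (1-s^2)^b := by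
      field_simp; field_simp at h; linarith
    rw [h']
    have f1 : (Nat.factorial (2*(l+1)) : ℝ) = (2*l+2)*((2*l+1)*Nat.factorial (2*l)) := by
      rw [show 2*(l+1) = 2*l+1+1 by ring, Nat.factorial_succ, Nat.factorial_succ]; push_cast; ring
    have f2 : (Nat.factorial (l+1) : ℝ) = (l+1)*Nat.factorial l := by
      rw [Nat.factorial_succ]; push_cast; ring
    have q0 : (Nat.factorial (2*l) : ℝ) ≠ 0 := by positivity
    have q1 : (Nat.factorial l : ℝ) ≠ 0 := by positivity
    rw [div_eq_iff q0] at ih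
    rw [ih, f1, f2, pow_succ, show (l:ℝ)+b+3/2 = b+3/2+l by ring]
    have : (l:ℝ)+1 ≠ 0 := by positivity
    have : 2*(l:ℝ)+1 ≠ 0 := by positivity
    have : 2*(l:ℝ)+2 ≠ 0 := by positivity
    generalize Real.Gamma (b+3/2+l) = G at *
    generalize b+3/2+(l:ℝ) = y at *
    field_simp
    ring

lemma poisson {b : ℝ} (hb : 0 < b) (t : ℝ) :
    (∫ s in (-1:ℝ)..1, (1-s^2)^b) * (∑' ℓ : ℕ,
      Real.Gamma (b+3/2) / (Real.Gamma (b+3/2 + ℓ) * (Nat.factorial ℓ : ℝ)) * (-t ^ 2 / 4) ^ ℓ)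
     = ∫ s in (-1:ℝ)..1, Real.cos (t*s) * (1-s^2)^b := by
  have hcA := contA (b := b) (by linarith)
  have H := intervalIntegral.hasSum_integral_of_dominated_convergence (μ := volume) (a := -1) (b := 1)
    (F := fun (n:ℕ) (s:ℝ) => ((-1) ^ n * (t*s) ^ (2 * n) / (Nat.factorial (2*n) : ℝ)) * (1-s^2)^b)
    (f := fun s => Real.cos (t*s) * (1-s^2)^b)
    (fun n _ => |t|^(2*n) / (Nat.factorial (2*n) : ℝ))
    (fun n => (Continuous.aestronglyMeasurable (by fun_prop)))
    (by
      intro n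
      refine Filter.Eventually.of_forall fun s hs => ?_
      rw [Set.uIoc_of_le (by norm_num)] at hs
      have h0 : (0:ℝ) ≤ 1 - s^2 := by nlinarith [hs.1, hs.2]
      have h1 : (1 - s^2)^b ≤ 1 := Real.rpow_le_one h0 (by nlinarith) hb.le
      have h2 : |s|^(2*n) ≤ 1 := pow_le_one₀ (abs_nonneg _) (abs_le.2 ⟨hs.1.le, hs.2⟩)
      have h3 := Real.rpow_nonneg h0 b
      rw [norm_mul, norm_div, norm_mul, norm_pow, norm_pow, norm_mul]
      simp only [Real.norm_eq_abs, abs_neg, abs_one, one_pow, one_mul, Nat.abs_cast, abs_of_nonneg h3, mul_pow]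
      have : |t|^(2*n) * |s|^(2*n) ≤ |t|^(2*n) := mul_le_of_le_one_right (by positivity) h2
      calc _ ≤ |t|^(2*n) * |s|^(2*n) / (Nat.factorial (2*n) : ℝ) := mul_le_of_le_one_right (by positivity) h1
        _ ≤ _ := by gcongr)
    (Filter.Eventually.of_forall fun s _ =>
      (Real.summable_pow_div_factorial |t|).comp_injective (i := fun n : ℕ => 2*n) (fun a b h => by simpa using h))
    (by simp)
    (Filter.Eventually.of_forall fun s _ => (Real.hasSum_cos (t*s)).mul_right _)
  rw [← H.tsum_eq, ← tsum_mul_left]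
  congr 1; ext n
  have := mom2 hb n
  have e : (∫ s in (-1:ℝ)..1, ((-1) ^ n * (t*s) ^ (2 * n) / (Nat.factorial (2*n) : ℝ)) * (1-s^2)^b)
    = (-1)^n * t^(2*n) * ((∫ s in (-1:ℝ)..1, s^(2*n) * (1-s^2)^b) / (Nat.factorial (2*n) : ℝ)) := by
    rw [← intervalIntegral.integral_div, ← intervalIntegral.integral_const_mul]
    congr 1; ext s; rw [mul_pow]; ring
  rw [e, this, div_pow, neg_pow, pow_mul]
  ring

open FourierTransform in
lemma inversion {b : ℝ} (hb : 1 < b) (x : ℝ) :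
    (1 / (2 * Real.pi)) * ∫ t : ℝ, Real.cos (t * x) *
      (∫ s in (-1:ℝ)..1, Real.cos (t*s) * (1-s^2)^b) = (max (1-x^2) 0)^b := by
  have hcA := contA (b := b) (by linarith)
  have hb0 : b ≠ 0 := by linarith
  set W : ℝ → ℝ := fun t => ∫ s in (-1:ℝ)..1, Real.cos (t*s) * (1-s^2)^b with hW
  have hWc : Continuous W := by
    apply intervalIntegral.continuous_parametric_intervalIntegral_of_continuous'
    have : Continuous (fun p : ℝ × ℝ => (1-p.2^2)^b) := hcA.comp continuous_snd
    simp only [Function.uncurry_def]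
    fun_prop
  obtain ⟨C, hC⟩ := decay hb
  have hWi : Integrable W := by
    refine (integrable_inv_one_add_sq.const_mul C).mono' hWc.aestronglyMeasurable ?_
    exact Filter.Eventually.of_forall fun t => hC t
  set g : ℝ → ℝ := fun s => (max (1-s^2) 0)^b with hg
  have hgc : Continuous g := Continuous.rpow_const (by fun_prop) (fun _ => Or.inr (by linarith))
  have hg0 : ∀ s, s ∉ Set.Ioc (-1:ℝ) 1 → g s = 0 := by
    intro s hs
    have : 1 - s^2 ≤ 0 := by
      rw [Set.mem_Ioc, not_and_or, not_lt, not_le] at hs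
      rcases hs with h | h <;> nlinarith
    simp only [hg, max_eq_right this, Real.zero_rpow hb0]
  have hgs : HasCompactSupport g :=
    HasCompactSupport.intro (isCompact_Icc (a := (-1:ℝ)) (b := 1))
      (fun s hs => hg0 s (fun h => hs (Set.Ioc_subset_Icc_self h)))
  have hgi : ∀ h : ℝ → ℝ, Continuous h → Integrable (fun s => h s * g s) := fun h hh =>
    (hh.mul hgc).integrable_of_hasCompactSupport hgs.mul_left
  have hWg : ∀ t, W t = ∫ s, Real.cos (t*s) * g s := by
    intro t
    rw [← setIntegral_eq_integral_of_forall_compl_eq_zero (s := Set.Ioc (-1:ℝ) 1)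
      (fun s hs => by simp [hg0 s hs])]
    simp only [hW]
    rw [intervalIntegral.integral_of_le (by norm_num)]
    refine setIntegral_congr_fun measurableSet_Ioc fun s hs => ?_
    have : 0 ≤ 1 - s^2 := by nlinarith [hs.1, hs.2]
    simp only [hg, max_eq_left this]
  have hodd : ∀ t, ∫ s, Real.sin (t*s) * g s = 0 := by
    intro t
    have := integral_neg_eq_self (fun s => Real.sin (t*s) * g s) volume
    have h2 : (fun s => Real.sin (t*(-s)) * g (-s)) = fun s => -(Real.sin (t*s) * g s) := by
      ext s; simp [hg]
    rw [h2, integral_neg] at this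
    linarith
  have hF : 𝓕 (fun s => (g s : ℂ)) = fun ξ => ((W (2*π*ξ) : ℝ) : ℂ) := by
    ext ξ
    rw [Real.fourier_real_eq_integral_exp_smul]
    have e : ∀ v : ℝ, Complex.exp (↑(-2 * Real.pi * v * ξ) * Complex.I) • (g v : ℂ)
        = ((Real.cos (2*π*ξ*v) * g v : ℝ) : ℂ) - ((Real.sin (2*π*ξ*v) * g v : ℝ) : ℂ) * Complex.I := by
      intro v
      rw [Complex.exp_mul_I, ← Complex.ofReal_cos, ← Complex.ofReal_sin,
        show -2 * Real.pi * v * ξ = -(2*π*ξ*v) by ring, Real.cos_neg, Real.sin_neg]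
      push_cast
      rw [smul_eq_mul]; ring
    simp_rw [e]
    rw [integral_sub, integral_mul_const, integral_complex_ofReal, integral_complex_ofReal, hodd, hWg]
    · simp
    · exact (hgi _ (by fun_prop)).ofReal
    · exact (hgi _ (by fun_prop)).ofReal.mul_const _
  have hW2 : Integrable (fun ξ => W (2*π*ξ)) := hWi.comp_mul_left' (by positivity)
  have inv := Continuous.fourierInv_fourier_eq (f := fun s => (g s : ℂ)) (by fun_prop)
    (by simpa using (hgi (fun _ => 1) (by fun_prop)).ofReal (𝕜 := ℂ)) (by rw [hF]; exact hW2.ofReal)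
  have invx := congrFun inv x
  rw [hF, Real.fourierInv_eq'] at invx
  have hint : Integrable (fun v : ℝ => Complex.exp (↑(2 * Real.pi * inner ℝ v x) * Complex.I) • ((W (2*π*v) : ℝ) : ℂ)) := by
    refine (hW2.ofReal (𝕜 := ℂ)).mono ?_ ?_
    · exact Continuous.aestronglyMeasurable (by fun_prop)
    · refine Filter.Eventually.of_forall fun v => ?_
      rw [norm_smul, Complex.norm_exp_ofReal_mul_I, one_mul]
      exact le_rfl
  have re := congrArg Complex.re invx
  have re2 := integral_re hint
  simp only [RCLike.re_eq_complex_re] at re2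
  rw [← re2, Complex.ofReal_re] at re
  change (1 / (2 * π)) * ∫ t : ℝ, Real.cos (t * x) * W t = g x
  rw [← re]
  have sub := Measure.integral_comp_mul_left (fun t => Real.cos (t*x) * W t) (2*π)
  rw [abs_of_pos (by positivity), smul_eq_mul] at sub
  rw [one_div, ← sub]
  congr 1; ext v
  rw [smul_eq_mul, Complex.re_mul_ofReal, Complex.exp_ofReal_mul_I_re]
  simp
  left; ring_nf

/-- The Fourier transform `ŵ` of `w(t) = ₀F₁(α; -t²/4)` satisfies the ODE
`(1-x²) ŵ'(x) + (2α-3) x ŵ(x) = 0` away from `x = ±1`. -/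
theorem stmt_8 (α : ℝ) (hα : 5 / 2 < α)
    (w : ℝ → ℝ)
    (hw : w = fun t : ℝ => ∑' ℓ : ℕ,
      Real.Gamma α / (Real.Gamma (α + ℓ) * (Nat.factorial ℓ : ℝ)) * (-t ^ 2 / 4) ^ ℓ)
    (what : ℝ → ℝ)
    (hwhat : what = fun x : ℝ => (1 / (2 * Real.pi)) * ∫ t : ℝ, Real.cos (t * x) * w t) :
    ∀ x : ℝ, x ≠ 1 → x ≠ -1 →
      DifferentiableAt ℝ what x ∧
      (1 - x ^ 2) * deriv what x + (2 * α - 3) * x * what x = 0 := by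
  obtain ⟨b, rfl⟩ : ∃ b, α = b + 3/2 := ⟨α - 3/2, by ring⟩
  have hb : 1 < b := by linarith
  set M := ∫ s in (-1:ℝ)..1, (1-s^2)^b with hM
  have hMpos : 0 < M := by
    apply intervalIntegral.intervalIntegral_pos_of_pos_on
    · exact (contA (by linarith)).intervalIntegrable _ _
    · intro s hs
      exact Real.rpow_pos_of_pos (by nlinarith [hs.1, hs.2]) _
    · norm_num
  have key : ∀ x, what x = M⁻¹ * (max (1-x^2) 0)^b := by
    intro x
    rw [← inversion hb x, hwhat]
    have : ∀ t, (∫ s in (-1:ℝ)..1, Real.cos (t*s) * (1-s^2)^b) = M * w t := by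
      intro t; rw [← poisson (by linarith) t, hw]
    simp_rw [this, mul_left_comm _ M, integral_const_mul]
    generalize (∫ t : ℝ, Real.cos (t * x) * w t) = J
    field_simp
  intro x h1 h2
  rcases lt_or_ge (1 - x^2) 0 with h | h
  · have ev : what =ᶠ[nhds x] fun _ => (0:ℝ) := by
      have : ∀ᶠ y in nhds x, 1 - y^2 < 0 :=
        (Continuous.tendsto (f := fun y : ℝ => 1 - y^2) (by fun_prop) x).eventually_lt_const h
      filter_upwards [this] with y hy
      rw [key, max_eq_right hy.le, Real.zero_rpow (by linarith), mul_zero]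
    have hd : HasDerivAt what 0 x := (hasDerivAt_const x (0:ℝ)).congr_of_eventuallyEq ev
    refine ⟨hd.differentiableAt, ?_⟩
    rw [hd.deriv, ev.eq_of_nhds]; ring
  · have h' : 0 < 1 - x^2 := by
      refine lt_of_le_of_ne h fun h0 => ?_
      have : (x-1)*(x+1) = 0 := by linarith
      rcases mul_eq_zero.1 this with h | h
      · exact h1 (by linarith)
      · exact h2 (by linarith)
    have ev : what =ᶠ[nhds x] fun y => M⁻¹ * (1-y^2)^b := by
      have : ∀ᶠ y in nhds x, 0 < 1 - y^2 :=
        (Continuous.tendsto (f := fun y : ℝ => 1 - y^2) (by fun_prop) x).eventually_const_lt h'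
      filter_upwards [this] with y hy
      rw [key, max_eq_left hy.le]
    have hd := ((derivA b x ⟨by nlinarith, by nlinarith⟩).const_mul M⁻¹).congr_of_eventuallyEq ev
    refine ⟨hd.differentiableAt, ?_⟩
    rw [hd.deriv, ev.eq_of_nhds]
    have : (1-x^2)^b = (1-x^2)^(b-1) * (1-x^2) := by
      rw [← Real.rpow_add_one h'.ne']; ring_nf
    rw [this]; ring
end

section
/- Let α > 3/2 be real and let w(t) = ∑_{ℓ=0}^∞ (Γ(α)/(Γ(α+ℓ)·ℓ!))·(−t²/4)^ℓ = ₀F₁(α; −t²/4). Then for every x ∈ ℝ with |x| < 1, (1/(2π))·∫_ℝ cos(t·x)·w(t) dt = (1/2)·(Γ(α)/(Γ(3/2)·Γ(α − 1/2)))·(1 − x²)^{α − 3/2}. -/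
open Real MeasureTheory

noncomputable def cc (a : ℝ) (l : ℕ) : ℝ := Real.Gamma a / (Real.Gamma (a + l) * (Nat.factorial l : ℝ))
noncomputable def GG (a z : ℝ) : ℝ := ∑' l : ℕ, cc a l * z ^ l

lemma cc_nonneg {a : ℝ} (ha : 1 ≤ a) (l : ℕ) : 0 ≤ cc a l := by
  unfold cc
  have := Real.Gamma_pos_of_pos (by linarith : 0 < a)
  have := Real.Gamma_pos_of_pos (by positivity : 0 < a + l)
  positivity

lemma gam_le {a : ℝ} (ha : 1 ≤ a) (l : ℕ) : Real.Gamma a ≤ Real.Gamma (a + l) := by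
  induction l with
  | zero => simp
  | succ n ih =>
    have h : Real.Gamma (a + (n + 1 : ℕ)) = (a + n) * Real.Gamma (a + n) := by
      push_cast
      rw [← add_assoc, Real.Gamma_add_one (by positivity)]
    have := Real.Gamma_pos_of_pos (by positivity : 0 < a + n)
    have hn : (0:ℝ) ≤ n := by positivity
    rw [h]; nlinarith

lemma cc_le {a : ℝ} (ha : 1 ≤ a) (l : ℕ) : cc a l ≤ 1 / (Nat.factorial l : ℝ) := by
  unfold cc
  have h1 := Real.Gamma_pos_of_pos (by positivity : 0 < a + l)
  have := gam_le ha l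
  rw [div_le_div_iff₀ (by positivity) (by positivity)]
  have : (0:ℝ) < (Nat.factorial l : ℝ) := by positivity
  nlinarith

lemma cc_zero {a : ℝ} (ha : 1 ≤ a) : cc a 0 = 1 := by
  have := Real.Gamma_pos_of_pos (by linarith : 0 < a)
  simp [cc, this.ne']

lemma cc_succ {a : ℝ} (ha : 1 ≤ a) (l : ℕ) : cc a (l + 1) * (l + 1) = cc (a + 1) l / a := by
  have h0 := Real.Gamma_pos_of_pos (by positivity : 0 < a + 1 + l)
  unfold cc
  rw [Real.Gamma_add_one (by positivity), Nat.factorial_succ]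
  push_cast
  rw [show a + (l + 1 : ℝ) = a + 1 + l by ring]
  field_simp

lemma cc_succ' {a : ℝ} (ha : 1 ≤ a) (l : ℕ) : cc a (l + 1) = cc a l / ((a + l) * (l + 1)) := by
  have h0 := Real.Gamma_pos_of_pos (by positivity : 0 < a + l)
  unfold cc
  rw [Nat.factorial_succ]
  push_cast
  rw [← add_assoc, Real.Gamma_add_one (by positivity)]
  field_simp

lemma cc_shift {a : ℝ} (ha : 1 ≤ a) (l : ℕ) : cc (a + 1) l = cc a l * a / (a + l) := by
  have h0 := Real.Gamma_pos_of_pos (by positivity : 0 < a + l)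
  unfold cc
  rw [show a + 1 + (l : ℝ) = (a + l) + 1 by ring, Real.Gamma_add_one (by positivity),
    Real.Gamma_add_one (by positivity)]
  field_simp

lemma cc_contig {a : ℝ} (ha : 1 ≤ a) (l : ℕ) :
    cc a (l + 1) - cc (a + 1) (l + 1) = cc (a + 1 + 1) l / (a * (a + 1)) := by
  rw [cc_succ' ha, cc_succ' (by linarith), cc_shift (a := a + 1) (by linarith), cc_shift ha]
  have : 0 < a + l := by positivity
  have : 0 < a + 1 + l := by positivity
  have : 0 < a := by positivity
  field_simp
  ring

lemma summ_abs {a : ℝ} (ha : 1 ≤ a) (z : ℝ) : Summable fun l : ℕ => ‖cc a l * z ^ l‖ := by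
  refine Summable.of_nonneg_of_le (fun _ => norm_nonneg _) (fun l => ?_)
    (Real.summable_pow_div_factorial |z|)
  rw [norm_mul, norm_pow, Real.norm_eq_abs, Real.norm_eq_abs, abs_of_nonneg (cc_nonneg ha l)]
  calc _ ≤ 1 / (Nat.factorial l : ℝ) * |z| ^ l := by gcongr; exact cc_le ha l
    _ = _ := by ring

lemma summ {a : ℝ} (ha : 1 ≤ a) (z : ℝ) : Summable fun l : ℕ => cc a l * z ^ l :=
  (summ_abs ha z).of_norm

lemma GG_contig {a : ℝ} (ha : 1 ≤ a) (z : ℝ) :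
    GG a z - GG (a + 1) z = z / (a * (a + 1)) * GG (a + 1 + 1) z := by
  unfold GG
  have h1 := summ ha z
  have h2 := summ (a := a + 1) (by linarith) z
  rw [h1.tsum_eq_zero_add, h2.tsum_eq_zero_add, cc_zero ha, cc_zero (by linarith)]
  rw [add_sub_add_left_eq_sub, ← ((summable_nat_add_iff 1).2 h1).tsum_sub
    ((summable_nat_add_iff 1).2 h2), ← tsum_mul_left]
  congr 1; ext l
  rw [← sub_mul, cc_contig ha]; ring

lemma GG_deriv {a : ℝ} (ha : 1 ≤ a) (z : ℝ) : HasDerivAt (GG a) (GG (a + 1) z / a) z := by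
  have ha' : (1:ℝ) ≤ a + 1 := by linarith
  have key : ∀ l : ℕ, ∀ y : ℝ, HasDerivAt (fun y => cc a l * y ^ l) (cc a l * (l * y ^ (l - 1))) y :=
    fun l y => (hasDerivAt_pow l y).const_mul _
  set R := |z| + 1
  have hsum : Summable fun l : ℕ => cc a l * (l * R ^ (l - 1)) := by
    rw [← summable_nat_add_iff 1]
    refine ((summ ha' R).div_const a).congr fun l => ?_
    rw [mul_div_right_comm, ← cc_succ ha]
    simp; ring
  have h := hasDerivAt_tsum_of_isPreconnected (t := Metric.ball (0:ℝ) R) (y₀ := 0) (y := z) hsum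
    Metric.isOpen_ball
    (convex_ball (0:ℝ) R).isPreconnected (fun l y _ => key l y) (fun l y hy => ?_)
    (by simp [R]; positivity) (summ ha 0) (by simp [R])
  · refine h.congr_deriv ?_
    unfold GG
    rw [Summable.tsum_eq_zero_add]
    · simp only [Nat.cast_zero, zero_mul, mul_zero, zero_add]
      rw [← tsum_div_const]
      congr 1; ext l
      rw [mul_div_right_comm, ← cc_succ ha]
      simp; ring
    · rw [← summable_nat_add_iff 1]
      refine ((summ ha' z).div_const a).congr fun l => ?_
      rw [mul_div_right_comm, ← cc_succ ha]
      rw [Nat.add_sub_cancel]; push_cast; ring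
  · have hy' : |y| ≤ R := by simpa using (Metric.mem_ball.1 hy).le
    rw [norm_mul, norm_mul, norm_pow, Real.norm_eq_abs, Real.norm_eq_abs, Real.norm_eq_abs,
      abs_of_nonneg (cc_nonneg ha l), Nat.abs_cast]
    have := cc_nonneg ha l
    gcongr

noncomputable def FF (a t : ℝ) : ℝ := GG a (-t ^ 2 / 4)

lemma FF_deriv {a : ℝ} (ha : 1 ≤ a) (t : ℝ) :
    HasDerivAt (FF a) (-(t / (2 * a)) * FF (a + 1) t) t := by
  have h : HasDerivAt (fun t : ℝ => -t ^ 2 / 4) (-(t / 2)) t := by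
    refine ((hasDerivAt_pow 2 t).neg.div_const 4).congr_deriv ?_
    norm_num; ring
  have := (GG_deriv ha (-t ^ 2 / 4)).comp t h
  refine this.congr_deriv ?_
  unfold FF; field_simp

lemma FF_cont {a : ℝ} (ha : 1 ≤ a) : Continuous (FF a) :=
  continuous_iff_continuousAt.2 fun t => (FF_deriv ha t).continuousAt

lemma FF_even (a t : ℝ) : FF a (-t) = FF a t := by simp [FF]

noncomputable def PP (a t : ℝ) : ℝ := t ^ (a - 1 / 2) * FF a t
noncomputable def QQ (a t : ℝ) : ℝ := t ^ (a + 1 / 2) * FF (a + 1) t / (2 * a)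

lemma PP_deriv {a : ℝ} (ha : 1 ≤ a) {t : ℝ} (ht : 0 < t) :
    HasDerivAt (PP a) ((a - 1 / 2) * PP a t / t - QQ a t) t := by
  have h := (Real.hasDerivAt_rpow_const (p := a - 1 / 2) (Or.inl ht.ne')).mul (FF_deriv ha t)
  refine h.congr_deriv ?_
  unfold PP QQ
  rw [show a + 1 / 2 = (a - 1 / 2) + 1 by ring, Real.rpow_add_one ht.ne',
    Real.rpow_sub_one ht.ne']
  field_simp
  ring

lemma QQ_deriv {a : ℝ} (ha : 1 ≤ a) {t : ℝ} (ht : 0 < t) :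
    HasDerivAt (QQ a) (-((a - 1 / 2) * QQ a t / t) + PP a t) t := by
  have h := ((Real.hasDerivAt_rpow_const (p := a + 1 / 2) (Or.inl ht.ne')).mul
    (FF_deriv (a := a + 1) (by linarith) t)).div_const (2 * a)
  refine h.congr_deriv ?_
  have hc := GG_contig ha (-t ^ 2 / 4)
  unfold PP QQ
  have : FF a t = FF (a + 1) t + (-t ^ 2 / 4) / (a * (a + 1)) * FF (a + 1 + 1) t := by
    unfold FF; linarith
  rw [this, Real.rpow_sub_one ht.ne', show a + 1 / 2 = (a - 1 / 2) + 1 by ring, Real.rpow_add_one ht.ne']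
  field_simp
  ring

lemma PP_bdd {a : ℝ} (ha : 1 ≤ a) : ∃ C, ∀ t, 2 * a ≤ t → |PP a t| ≤ C := by
  set k := a - 1 / 2 with hk
  have hkp : 0 < k := by linarith
  let E : ℝ → ℝ := fun t => PP a t ^ 2 + QQ a t ^ 2 - 2 * k * (PP a t * QQ a t) / t
  have hE : ∀ t, 0 < t → HasDerivAt E (2 * k * (PP a t * QQ a t) / t ^ 2) t := by
    intro t ht
    have hP := PP_deriv ha ht
    have hQ := QQ_deriv ha ht
    have h := ((hP.pow 2).add (hQ.pow 2)).sub
      (((hP.mul hQ).const_mul (2 * k)).div (hasDerivAt_id t) ht.ne')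
    refine h.congr_deriv ?_
    simp
    field_simp
    ring
  have hlow : ∀ t, 2 * a ≤ t → PP a t ^ 2 + QQ a t ^ 2 ≤ 2 * E t := by
    intro t ht
    have ht0 : 0 < t := by linarith
    have hs : 2 * k / t ≤ 1 := by rw [div_le_one ht0]; linarith
    have hs0 : 0 ≤ 2 * k / t := by positivity
    have : E t = PP a t ^ 2 + QQ a t ^ 2 - (2 * k / t) * (PP a t * QQ a t) := by
      simp only [E]; ring
    rw [this]
    have h1 : (2 * k / t) * (PP a t * QQ a t) ≤ (2 * k / t) * ((PP a t ^ 2 + QQ a t ^ 2) / 2) := by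
      gcongr; nlinarith [sq_nonneg (PP a t - QQ a t)]
    have h2 : (2 * k / t) * ((PP a t ^ 2 + QQ a t ^ 2) / 2) ≤ 1 * ((PP a t ^ 2 + QQ a t ^ 2) / 2) := by
      gcongr
    linarith
  have hH : ∀ t, 0 < t → HasDerivAt (fun t => E t * Real.exp (2 * k / t))
      (2 * k / t ^ 2 * Real.exp (2 * k / t) * (PP a t * QQ a t - E t)) t := by
    intro t ht
    have h := (hE t ht).mul ((((hasDerivAt_const t (2 * k)).div (hasDerivAt_id t) ht.ne')).exp)
    refine h.congr_deriv ?_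
    simp
    field_simp
    ring
  have hanti : AntitoneOn (fun t => E t * Real.exp (2 * k / t)) (Set.Ici (2 * a)) := by
    apply antitoneOn_of_deriv_nonpos (convex_Ici _)
    · intro t ht
      exact (hH t (by simp at ht; linarith)).continuousAt.continuousWithinAt
    · intro t ht
      simp at ht
      exact (hH t (by linarith)).differentiableAt.differentiableWithinAt
    · intro t ht
      simp at ht
      rw [(hH t (by linarith)).deriv]
      have := hlow t ht.le
      apply mul_nonpos_of_nonneg_of_nonpos
      · positivity
      · nlinarith [sq_nonneg (PP a t - QQ a t)]
  refine ⟨Real.sqrt (2 * (E (2 * a) * Real.exp (2 * k / (2 * a)))), fun t ht => ?_⟩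
  apply Real.abs_le_sqrt
  have ht0 : 0 < t := by linarith
  have h1 := hanti (Set.mem_Ici.2 le_rfl) (Set.mem_Ici.2 ht) ht
  simp only at h1
  have h2 := hlow t ht
  have hE0 : 0 ≤ E t := by nlinarith [sq_nonneg (PP a t), sq_nonneg (QQ a t)]
  have h3 : 1 ≤ Real.exp (2 * k / t) := Real.one_le_exp (by positivity)
  nlinarith [sq_nonneg (QQ a t)]

lemma FF_integrable {a : ℝ} (ha : 3 / 2 < a) : Integrable (FF a) := by
  have ha1 : 1 ≤ a := by linarith
  obtain ⟨C, hC⟩ := PP_bdd ha1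
  have hIoi : IntegrableOn (FF a) (Set.Ioi (2 * a)) := by
    have hg : IntegrableOn (fun t : ℝ => C * t ^ (-(a - 1 / 2))) (Set.Ioi (2 * a)) :=
      (integrableOn_Ioi_rpow_of_lt (by linarith) (by linarith)).const_mul C
    refine Integrable.mono' hg (FF_cont ha1).aestronglyMeasurable ?_
    filter_upwards [ae_restrict_mem measurableSet_Ioi] with t ht
    have ht' : 2 * a < t := ht
    have ht0 : 0 < t := by linarith
    have h := hC t ht'.le
    unfold PP at h
    have hp := Real.rpow_pos_of_pos ht0 (a - 1 / 2)
    rw [abs_mul, abs_of_pos hp] at h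
    rw [Real.rpow_neg ht0.le, Real.norm_eq_abs, ← div_eq_mul_inv, le_div_iff₀ hp]
    linarith
  have hIci : IntegrableOn (FF a) (Set.Ioi 0) := by
    have : Set.Ioi (0:ℝ) = Set.Ioc 0 (2 * a) ∪ Set.Ioi (2 * a) := by
      rw [Set.Ioc_union_Ioi_eq_Ioi]; linarith
    rw [this]
    exact ((FF_cont ha1).integrableOn_Icc.mono_set Set.Ioc_subset_Icc_self).union hIoi
  have h := (integrableOn_Ici_iff_integrableOn_Ioi (μ := volume)).2 hIci
  have hneg : IntegrableOn (FF a) (Set.Iic 0) := by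
    have := h.comp_neg
    simpa [FF_even] using this
  rw [← integrableOn_univ, ← Set.Iic_union_Ioi (a := (0:ℝ))]
  exact hneg.union hIci

lemma exp_even {g : ℝ → ℝ} (hg : Integrable g) (hev : ∀ v, g (-v) = g v) (s : ℝ) :
    ∫ v : ℝ, Complex.exp (((s * v : ℝ) : ℂ) * Complex.I) • (g v : ℂ)
      = ((∫ v : ℝ, Real.cos (s * v) * g v : ℝ) : ℂ) := by
  have hc : Integrable fun v : ℝ => Real.cos (s * v) * g v := by
    refine hg.bdd_mul (c := 1) (by fun_prop) (Filter.Eventually.of_forall fun v => ?_)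
    simpa using Real.abs_cos_le_one _
  have hs : Integrable fun v : ℝ => Real.sin (s * v) * g v := by
    refine hg.bdd_mul (c := 1) (by fun_prop) (Filter.Eventually.of_forall fun v => ?_)
    simpa using Real.abs_sin_le_one _
  have h0 : ∫ v : ℝ, Real.sin (s * v) * g v = 0 := by
    have h := integral_neg_eq_self (fun v : ℝ => Real.sin (s * v) * g v) volume
    simp only [hev, mul_neg, Real.sin_neg, neg_mul, integral_neg] at h
    linarith
  have : ∀ v : ℝ, Complex.exp (((s * v : ℝ) : ℂ) * Complex.I) • (g v : ℂ)
      = ((Real.cos (s * v) * g v : ℝ) : ℂ) + ((Real.sin (s * v) * g v : ℝ) : ℂ) * Complex.I := by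
    intro v
    rw [Complex.exp_mul_I, ← Complex.ofReal_cos, ← Complex.ofReal_sin, smul_eq_mul]
    push_cast; ring
  simp_rw [this]
  rw [integral_add hc.ofReal (hs.ofReal.mul_const _), integral_mul_const]
  have e1 := integral_ofReal (𝕜 := ℂ) (μ := volume) (f := fun v : ℝ => Real.cos (s * v) * g v)
  have e2 := integral_ofReal (𝕜 := ℂ) (μ := volume) (f := fun v : ℝ => Real.sin (s * v) * g v)
  rw [h0] at e2
  erw [e1, e2]
  simp

noncomputable def hh (b x : ℝ) : ℝ := (1 - x ^ 2) ^ b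
noncomputable def MM (b : ℝ) (l : ℕ) : ℝ := ∫ x in (-1:ℝ)..1, x ^ (2 * l) * hh b x

lemma hh_cont {b : ℝ} (hb : 0 ≤ b) : Continuous (hh b) := by
  unfold hh
  exact Continuous.rpow_const (by fun_prop) fun x => Or.inr hb

lemma MM_succ {b : ℝ} (hb : 0 < b) (l : ℕ) :
    MM b (l + 1) * (2 * l + 3 + 2 * b) = MM b l * (2 * l + 1) := by
  have hd : ∀ x : ℝ, HasDerivAt (fun x : ℝ => x ^ (2 * l + 1) * (1 - x ^ 2) ^ (b + 1))
      ((2 * l + 1) * x ^ (2 * l) * (1 - x ^ 2) ^ (b + 1)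
        + x ^ (2 * l + 1) * (-(2 * x) * (b + 1) * (1 - x ^ 2) ^ b)) x := by
    intro x
    have h1 : HasDerivAt (fun x : ℝ => 1 - x ^ 2) (-(2 * x)) x := by
      refine ((hasDerivAt_pow 2 x).const_sub 1).congr_deriv ?_
      norm_num
    have h2 := h1.rpow_const (p := b + 1) (Or.inr (by linarith))
    refine ((hasDerivAt_pow (2 * l + 1) x).mul h2).congr_deriv ?_
    simp
  have hbc := hh_cont hb.le
  have hbc1 := hh_cont (b := b + 1) (by linarith)
  unfold hh at hbc hbc1
  have h := intervalIntegral.integral_eq_sub_of_hasDerivAt (a := -1) (b := 1) (fun x _ => hd x)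
    (Continuous.intervalIntegrable (by fun_prop) _ _)
  have hz : (0:ℝ) ^ (b + 1) = 0 := Real.zero_rpow (by linarith)
  have hcongr : ∫ x in (-1:ℝ)..1, ((2 * l + 1) * x ^ (2 * l) * (1 - x ^ 2) ^ (b + 1)
        + x ^ (2 * l + 1) * (-(2 * x) * (b + 1) * (1 - x ^ 2) ^ b))
      = ∫ x in (-1:ℝ)..1, ((2 * l + 1) * (x ^ (2 * l) * hh b x)
        - (2 * l + 3 + 2 * b) * (x ^ (2 * (l + 1)) * hh b x)) := by
    apply intervalIntegral.integral_congr
    intro x hx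
    rw [Set.uIcc_of_le (by norm_num)] at hx
    have : 0 ≤ 1 - x ^ 2 := by nlinarith [hx.1, hx.2]
    simp only [hh]
    rw [Real.rpow_add_one' this (by linarith)]
    ring
  rw [hcongr, intervalIntegral.integral_sub
    (Continuous.intervalIntegrable (by unfold hh; fun_prop) _ _)
    (Continuous.intervalIntegrable (by unfold hh; fun_prop) _ _),
    intervalIntegral.integral_const_mul, intervalIntegral.integral_const_mul] at h
  norm_num [hz] at h
  change _ * MM b l - _ * MM b (l + 1) = 0 at h
  linarith

lemma MM_eq {a : ℝ} (ha : 3 / 2 < a) (l : ℕ) :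
    MM (a - 3 / 2) l = MM (a - 3 / 2) 0 * cc a l * (Nat.factorial (2 * l) : ℝ) / 4 ^ l := by
  induction l with
  | zero => simp [cc_zero (by linarith : 1 ≤ a)]
  | succ n ih =>
    have h := MM_succ (b := a - 3 / 2) (by linarith) n
    rw [cc_succ' (by linarith), show 2 * (n + 1) = 2 * n + 1 + 1 by ring, Nat.factorial_succ,
      Nat.factorial_succ]
    push_cast
    have h2 : (2 * (n:ℝ) + 3 + 2 * (a - 3 / 2)) = 2 * (a + n) := by ring
    have h3 : 0 < a + n := by positivity
    rw [h2, ih] at h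
    rw [eq_div_iff (by positivity)]
    field_simp at h ⊢
    rw [show (2 * (n:ℝ) + 1 + 1) = 2 * (n + 1) by ring]
    have : (0:ℝ) < n + 1 := by positivity
    rw [pow_succ]
    linear_combination (2 * (n + 1) : ℝ) * h

lemma cos_int {a : ℝ} (ha : 3 / 2 < a) (t : ℝ) :
    ∫ x in (-1:ℝ)..1, Real.cos (t * x) * hh (a - 3 / 2) x = MM (a - 3 / 2) 0 * FF a t := by
  have hb : 0 ≤ a - 3 / 2 := by linarith
  have hc := hh_cont hb
  have h := intervalIntegral.hasSum_integral_of_dominated_convergence (μ := volume)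
    (a := (-1:ℝ)) (b := 1)
    (F := fun (l : ℕ) x => (-1) ^ l * (t * x) ^ (2 * l) / (Nat.factorial (2 * l) : ℝ) * hh (a - 3 / 2) x)
    (f := fun x => Real.cos (t * x) * hh (a - 3 / 2) x)
    (fun l _ => |t| ^ (2 * l) / (Nat.factorial (2 * l) : ℝ))
    (fun l => (by fun_prop : Continuous _).aestronglyMeasurable)
    (fun l => Filter.Eventually.of_forall fun x hx => ?_)
    (Filter.Eventually.of_forall fun x hx => (Real.hasSum_cosh |t|).summable)
    (by simp)
    (Filter.Eventually.of_forall fun x hx => (Real.hasSum_cos (t * x)).mul_right _)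
  · rw [← h.tsum_eq]
    unfold FF GG
    rw [← tsum_mul_left]
    congr 1; ext l
    have : ∀ x : ℝ, (-1) ^ l * (t * x) ^ (2 * l) / (Nat.factorial (2 * l) : ℝ) * hh (a - 3 / 2) x
      = ((-1) ^ l * t ^ (2 * l) / (Nat.factorial (2 * l) : ℝ)) * (x ^ (2 * l) * hh (a - 3 / 2) x) := by
      intro x; rw [mul_pow]; ring
    simp_rw [this]
    rw [intervalIntegral.integral_const_mul]
    change _ * MM _ l = _
    rw [MM_eq ha, div_pow, neg_pow (t ^ 2), ← pow_mul]
    field_simp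
  · rw [Set.uIoc_of_le (by norm_num)] at hx
    have h1 : 0 ≤ 1 - x ^ 2 := by nlinarith [hx.1, hx.2]
    have h2 : |x| ≤ 1 := abs_le.2 ⟨hx.1.le, hx.2⟩
    have h3 : |hh (a - 3 / 2) x| ≤ 1 := by
      unfold hh
      rw [abs_of_nonneg (Real.rpow_nonneg h1 _)]
      exact Real.rpow_le_one h1 (by nlinarith) hb
    simp only [norm_mul, norm_div, norm_pow, norm_neg, norm_one, one_pow, one_mul,
      Real.norm_eq_abs, Nat.abs_cast]
    rw [mul_pow]
    have h4 : |x| ^ (2 * l) ≤ 1 := pow_le_one₀ (abs_nonneg _) h2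
    calc |t| ^ (2 * l) * |x| ^ (2 * l) / (Nat.factorial (2 * l) : ℝ) * |hh (a - 3 / 2) x|
        ≤ |t| ^ (2 * l) * 1 / (Nat.factorial (2 * l) : ℝ) * 1 := by gcongr
      _ = _ := by ring

lemma MM_zero {b : ℝ} (hb : 0 < b) :
    MM b 0 = Real.sqrt Real.pi * Real.Gamma (b + 1) / Real.Gamma (b + 3 / 2) := by
  have hbeta : ∫ u in (0:ℝ)..1, u ^ b * (1 - u) ^ b
      = Real.Gamma (b + 1) * Real.Gamma (b + 1) / Real.Gamma (2 * (b + 1)) := by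
    have h1 := Complex.Gamma_mul_Gamma_eq_betaIntegral (s := ((b + 1 : ℝ) : ℂ)) (t := ((b + 1 : ℝ) : ℂ))
      (by simp; linarith) (by simp; linarith)
    have h2 : Complex.betaIntegral ((b + 1 : ℝ) : ℂ) ((b + 1 : ℝ) : ℂ)
        = ((∫ u in (0:ℝ)..1, u ^ b * (1 - u) ^ b : ℝ) : ℂ) := by
      rw [Complex.betaIntegral, ← intervalIntegral.integral_ofReal]
      apply intervalIntegral.integral_congr
      intro u hu
      rw [Set.uIcc_of_le (by norm_num)] at hu
      simp only
      push_cast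
      rw [Complex.ofReal_cpow hu.1, Complex.ofReal_cpow (by linarith [hu.2])]
      push_cast
      simp
    rw [h2, ← Complex.ofReal_add, Complex.Gamma_ofReal, Complex.Gamma_ofReal] at h1
    norm_cast at h1
    have := Real.Gamma_pos_of_pos (by linarith : 0 < 2 * (b + 1))
    rw [eq_div_iff this.ne', h1, two_mul]; ring
  have hM : MM b 0 = 2 * 4 ^ b * ∫ u in (0:ℝ)..1, u ^ b * (1 - u) ^ b := by
    have h := intervalIntegral.integral_comp_mul_add (a := (0:ℝ)) (b := 1) (hh b) (c := 2)
      (by norm_num) (-1)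
    rw [show (2:ℝ) * 0 + -1 = -1 by norm_num, show (2:ℝ) * 1 + -1 = 1 by norm_num, smul_eq_mul] at h
    have h' : ∫ u in (0:ℝ)..1, hh b (2 * u + -1)
        = 4 ^ b * ∫ u in (0:ℝ)..1, u ^ b * (1 - u) ^ b := by
      rw [← intervalIntegral.integral_const_mul]
      apply intervalIntegral.integral_congr
      intro u hu
      rw [Set.uIcc_of_le (by norm_num)] at hu
      simp only [hh]
      have hu2 : 0 ≤ 1 - u := by linarith [hu.2]
      rw [show 1 - (2 * u + -1) ^ 2 = 4 * (u * (1 - u)) by ring,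
        Real.mul_rpow (by norm_num) (mul_nonneg hu.1 hu2), Real.mul_rpow hu.1 hu2]
    rw [h'] at h
    simp only [MM, mul_zero, pow_zero, one_mul]
    linarith
  rw [hM, hbeta]
  have hd := Real.Gamma_mul_Gamma_add_half (b + 1)
  have hp := Real.Gamma_pos_of_pos (by linarith : 0 < 2 * (b + 1))
  have hq := Real.Gamma_pos_of_pos (by linarith : 0 < b + 3 / 2)
  have hr := Real.Gamma_pos_of_pos (by linarith : 0 < b + 1)
  rw [show b + 1 + 1 / 2 = b + 3 / 2 by ring] at hd
  have h4 : (2:ℝ) * 4 ^ b * 2 ^ (1 - 2 * (b + 1)) = 1 := by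
    rw [show (4:ℝ) = 2 ^ (2:ℝ) by norm_num, ← Real.rpow_mul (by norm_num)]
    nth_rewrite 1 [← Real.rpow_one 2]
    rw [← Real.rpow_add (by norm_num), ← Real.rpow_add (by norm_num)]
    ring_nf
    simp
  rw [← mul_div_assoc, div_eq_div_iff hp.ne' hq.ne']
  linear_combination (2 * 4 ^ b * Real.Gamma (b + 1)) * hd
    + Real.Gamma (b + 1) * Real.Gamma (2 * (b + 1)) * √π * h4

noncomputable def gg (b x : ℝ) : ℝ := (max (1 - x ^ 2) 0) ^ b

lemma gg_cont {b : ℝ} (hb : 0 ≤ b) : Continuous (gg b) := by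
  unfold gg
  exact Continuous.rpow_const (by fun_prop) fun x => Or.inr hb

lemma gg_zero {b : ℝ} (hb : 0 < b) {x : ℝ} (hx : x ∉ Set.Ioc (-1:ℝ) 1) : gg b x = 0 := by
  unfold gg
  rw [max_eq_right, Real.zero_rpow hb.ne']
  by_contra! h
  exact hx ⟨by nlinarith, by nlinarith⟩

lemma gg_eq {b : ℝ} {x : ℝ} (hx : x ∈ Set.Icc (-1:ℝ) 1) : gg b x = hh b x := by
  unfold gg hh
  rw [max_eq_left]
  nlinarith [hx.1, hx.2]

lemma gg_int {b : ℝ} (hb : 0 < b) : Integrable (gg b) := by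
  refine (gg_cont hb.le).integrable_of_hasCompactSupport ?_
  refine HasCompactSupport.intro (K := Set.Icc (-1) 1) isCompact_Icc fun x hx => ?_
  exact gg_zero hb fun h => hx ⟨h.1.le, h.2⟩

lemma gg_cos {a : ℝ} (ha : 3 / 2 < a) (t : ℝ) :
    ∫ x, Real.cos (t * x) * gg (a - 3 / 2) x = MM (a - 3 / 2) 0 * FF a t := by
  rw [← cos_int ha, intervalIntegral.integral_of_le (by norm_num),
    ← setIntegral_eq_integral_of_forall_compl_eq_zero (s := Set.Ioc (-1) 1)]
  · apply setIntegral_congr_fun measurableSet_Ioc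
    intro x hx
    simp only
    rw [gg_eq ⟨hx.1.le, hx.2⟩]
  · intro x hx
    rw [gg_zero (by linarith) hx, mul_zero]

open FourierTransform in
theorem stmt_9 (α : ℝ) (hα : 3 / 2 < α)
    (w : ℝ → ℝ)
    (hw : w = fun t : ℝ => ∑' ℓ : ℕ,
      Real.Gamma α / (Real.Gamma (α + ℓ) * (Nat.factorial ℓ : ℝ)) * (-t ^ 2 / 4) ^ ℓ) :
    ∀ x : ℝ, |x| < 1 →
      (1 / (2 * Real.pi)) * ∫ t : ℝ, Real.cos (t * x) * w t
        = (1 / 2) * (Real.Gamma α / (Real.Gamma (3 / 2) * Real.Gamma (α - 1 / 2))) *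
          (1 - x ^ 2) ^ (α - 3 / 2) := by
  intro x hx
  have hwF : w = FF α := hw
  subst hwF
  set b := α - 3 / 2 with hb
  have hb0 : 0 < b := by linarith
  let f : ℝ → ℂ := fun v => (gg b v : ℂ)
  have hfc : Continuous f := Complex.continuous_ofReal.comp (gg_cont hb0.le)
  have hfi : Integrable f := (gg_int hb0).ofReal
  have hF : 𝓕 f = fun ξ : ℝ => ((MM b 0 * FF α (2 * π * ξ) : ℝ) : ℂ) := by
    ext ξ
    rw [Real.fourier_real_eq_integral_exp_smul, ← gg_cos hα]
    rw [show (∫ x, Real.cos (2 * π * ξ * x) * gg (α - 3 / 2) x)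
      = ∫ x, Real.cos (-(2 * π * ξ) * x) * gg (α - 3 / 2) x by simp only [neg_mul, Real.cos_neg]]
    rw [← exp_even (gg_int hb0) (fun v => by simp [gg])]
    congr 1; ext v
    congr 3
    push_cast; ring
  have hgi : Integrable (fun ξ : ℝ => MM b 0 * FF α (2 * π * ξ)) :=
    ((FF_integrable hα).comp_mul_left' (by positivity)).const_mul _
  have hFi : Integrable (𝓕 f) := by rw [hF]; exact hgi.ofReal
  have hinv := congrFun (hfc.fourierInv_fourier_eq hfi hFi) x
  rw [hF, Real.fourierInv_eq' ] at hinv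
  have h2 : ∫ v : ℝ, Real.cos (2 * π * x * v) * (MM b 0 * FF α (2 * π * v)) = gg b x := by
    have h := exp_even hgi (fun v => by rw [mul_neg, FF_even]) (2 * π * x)
    apply Complex.ofReal_injective
    rw [← h]
    refine Eq.trans ?_ hinv
    congr 1; ext v
    congr 3
    simp; ring
  have h3 : ∫ v : ℝ, Real.cos (2 * π * x * v) * (MM b 0 * FF α (2 * π * v))
      = MM b 0 * (1 / (2 * π) * ∫ t : ℝ, Real.cos (t * x) * FF α t) := by
    have h := Measure.integral_comp_mul_left (fun t => Real.cos (t * x) * FF α t) (2 * π)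
    rw [abs_of_pos (by positivity), smul_eq_mul, ← one_div] at h
    rw [← h, ← integral_const_mul]
    congr 1; ext v
    rw [show 2 * π * x * v = 2 * π * v * x by ring]; ring
  rw [h3, gg_eq ⟨(abs_lt.1 hx).1.le, (abs_lt.1 hx).2.le⟩, MM_zero hb0] at h2
  have hq := Real.Gamma_pos_of_pos (by linarith : 0 < α)
  have hr := Real.Gamma_pos_of_pos (by linarith : 0 < α - 1 / 2)
  have hG : Real.Gamma (3 / 2) = √π / 2 := by
    rw [show (3:ℝ) / 2 = 1 / 2 + 1 by norm_num, Real.Gamma_add_one (by norm_num),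
      Real.Gamma_one_half_eq]; ring
  rw [show b + 1 = α - 1 / 2 by rw [hb]; ring, show b + 3 / 2 = α by rw [hb]; ring] at h2
  have hsp : 0 < √π := Real.sqrt_pos.2 Real.pi_pos
  rw [hG]
  unfold hh at h2
  rw [← h2]
  generalize (∫ t : ℝ, Real.cos (t * x) * FF α t) = J
  generalize Real.Gamma (α - 1 / 2) = K at *
  field_simp
end

section
/- Let α > 3/2 be real and let w(t) = ∑_{ℓ=0}^∞ (Γ(α)/(Γ(α+ℓ)·ℓ!))·(−t²/4)^ℓ = ₀F₁(α; −t²/4). Then for every x ∈ ℝ with |x| > 1, (1/(2π))·∫_ℝ cos(t·x)·w(t) dt = 0. -/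
open Real MeasureTheory

open ProbabilityTheory Filter Topology

lemma aux_integral_pdf {a b : ℝ} (ha : 0 < a) (hb : 0 < b) :
    ∫ x, betaPDFReal a b x = 1 := by
  rw [integral_eq_lintegral_of_nonneg_ae]
  · have := lintegral_betaPDF_eq_one ha hb
    unfold betaPDF at this
    rw [this]; simp
  · refine Filter.Eventually.of_forall fun x => ?_
    by_cases h : 0 < x ∧ x < 1
    · exact (betaPDFReal_pos h.1 h.2 ha hb).le
    · simp [betaPDFReal, h]
  · exact (measurable_betaPDFReal a b).aestronglyMeasurable

lemma aux_moment {a b : ℝ} (ha : 0 < a) (hb : 0 < b) (l : ℕ) :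
    ∫ x, x ^ l ∂(betaMeasure a b) = beta (a + l) b / beta a b := by
  have hal : 0 < a + l := by positivity
  have h1 := beta_pos ha hb
  have h2 := beta_pos hal hb
  unfold betaMeasure
  rw [integral_withDensity_eq_integral_toReal_smul]
  · have : ∀ x : ℝ, (betaPDF a b x).toReal • x ^ l
        = beta (a + l) b / beta a b * betaPDFReal (a + l) b x := by
      intro x
      by_cases h : 0 < x ∧ x < 1
      · rw [betaPDF, ENNReal.toReal_ofReal (betaPDFReal_pos h.1 h.2 ha hb).le]
        simp only [betaPDFReal, h, and_self, if_true, smul_eq_mul]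
        have : x ^ (a + l - 1) = x ^ (a - 1) * x ^ l := by
          rw [← Real.rpow_natCast, ← Real.rpow_add h.1]; ring_nf
        rw [this]
        field_simp
      · simp [betaPDF, betaPDFReal, h]
    simp_rw [this]
    rw [integral_const_mul, aux_integral_pdf hal hb, mul_one]
  · exact (measurable_betaPDFReal a b).ennreal_ofReal
  · exact Filter.Eventually.of_forall fun x => by simp [betaPDF]

lemma aux_ae {a b : ℝ} : ∀ᵐ x ∂(betaMeasure a b), 0 ≤ x ∧ x ≤ 1 := by
  unfold betaMeasure
  have hm : Measurable (betaPDF a b) := (measurable_betaPDFReal a b).ennreal_ofReal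
  rw [ae_withDensity_iff hm]
  refine Filter.Eventually.of_forall fun x hx => ?_
  constructor
  · by_contra! h
    exact hx (betaPDF_eq_zero_of_nonpos h.le)
  · by_contra! h
    exact hx (betaPDF_eq_zero_of_one_le h.le)

lemma aux_gamma_half (l : ℕ) :
    Real.Gamma (1 / 2 + l) * (4 ^ l * (Nat.factorial l : ℝ))
      = (Nat.factorial (2 * l) : ℝ) * Real.Gamma (1 / 2) := by
  induction l with
  | zero => simp
  | succ k ih =>
    have : (1 / 2 + ((k + 1 : ℕ) : ℝ)) = (1 / 2 + k) + 1 := by push_cast; ring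
    rw [this, Real.Gamma_add_one (by positivity)]
    have h2 : 2 * (k + 1) = 2 * k + 1 + 1 := by ring
    rw [h2, Nat.factorial_succ, Nat.factorial_succ, Nat.factorial_succ]
    push_cast
    rw [pow_succ]
    linear_combination ((1 / 2 + (k:ℝ)) * 4 * (k + 1)) * ih

lemma aux_coeff {α : ℝ} (hα : 3 / 2 < α) (l : ℕ) (t : ℝ) :
    (-1) ^ l * t ^ (2 * l) / (Nat.factorial (2 * l) : ℝ) *
      (beta (1 / 2 + l) (α - 1 / 2) / beta (1 / 2) (α - 1 / 2)) =
    Real.Gamma α / (Real.Gamma (α + l) * (Nat.factorial l : ℝ)) * (-t ^ 2 / 4) ^ l := by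
  have h1 : Real.Gamma (1 / 2) ≠ 0 := (Real.Gamma_pos_of_pos (by norm_num)).ne'
  have h2 : Real.Gamma (α - 1 / 2) ≠ 0 := (Real.Gamma_pos_of_pos (by linarith)).ne'
  have h3 : Real.Gamma α ≠ 0 := (Real.Gamma_pos_of_pos (by linarith)).ne'
  have h4 : Real.Gamma (α + l) ≠ 0 := by
    refine (Real.Gamma_pos_of_pos ?_).ne'
    have : (0:ℝ) ≤ l := by positivity
    linarith
  have h5 : (Nat.factorial (2 * l) : ℝ) ≠ 0 := by positivity
  have h6 : (Nat.factorial l : ℝ) ≠ 0 := by positivity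
  have e1 : (1 / 2 + l + (α - 1 / 2) : ℝ) = α + l := by ring
  have e2 : (1 / 2 + (α - 1 / 2) : ℝ) = α := by ring
  have h := aux_gamma_half l
  have hG : Real.Gamma (1 / 2 + l) = (Nat.factorial (2 * l) : ℝ) * Real.Gamma (1 / 2)
      / (4 ^ l * (Nat.factorial l : ℝ)) := by
    rw [eq_div_iff (by positivity)]; exact h
  have e3 : (-t ^ 2 / 4) ^ l = (-1) ^ l * t ^ (2 * l) / 4 ^ l := by
    rw [div_pow, neg_pow, ← pow_mul]
  unfold beta
  rw [e1, e2, hG, e3]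
  generalize Real.Gamma (α - 1 / 2) = G at *
  field_simp

lemma aux_w {α : ℝ} (hα : 3 / 2 < α) (t : ℝ) :
    ∑' ℓ : ℕ, Real.Gamma α / (Real.Gamma (α + ℓ) * (Nat.factorial ℓ : ℝ)) * (-t ^ 2 / 4) ^ ℓ
      = ∫ u, Real.cos (t * √u) ∂(betaMeasure (1 / 2) (α - 1 / 2)) := by
  have hb : 0 < α - 1 / 2 := by linarith
  have ha : (0:ℝ) < 1 / 2 := by norm_num
  set μ := betaMeasure (1 / 2) (α - 1 / 2) with hμ
  have : IsProbabilityMeasure μ := isProbabilityMeasureBeta ha hb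
  have hpow : ∀ l : ℕ, ∀ᵐ u ∂μ, ‖u ^ l‖ ≤ 1 := fun l => by
    filter_upwards [aux_ae (a := 1/2) (b := α - 1/2)] with u hu
    rw [Real.norm_of_nonneg (by have := hu.1; positivity)]
    exact pow_le_one₀ hu.1 hu.2
  have hint : ∀ l : ℕ, Integrable (fun u : ℝ => u ^ l) μ := fun l =>
    Integrable.of_bound (by fun_prop) 1 (hpow l)
  let F : ℕ → ℝ → ℝ := fun l u => (-1) ^ l * t ^ (2 * l) / (Nat.factorial (2 * l) : ℝ) * u ^ l
  have hF : ∀ l, Integrable (F l) μ := fun l => (hint l).const_mul _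
  have hs : Summable fun l => ∫ u, ‖F l u‖ ∂μ := by
    refine Summable.of_nonneg_of_le (fun l => integral_nonneg fun u => norm_nonneg _) ?_
      (Real.hasSum_cosh t).summable
    intro l
    have hle : ∀ᵐ u ∂μ, ‖F l u‖ ≤ t ^ (2 * l) / (Nat.factorial (2 * l) : ℝ) := by
      filter_upwards [hpow l] with u hu
      have h0 : 0 ≤ t ^ (2 * l) := by rw [pow_mul]; positivity
      simp only [F]
      rw [norm_mul, norm_div, norm_mul, norm_pow, norm_neg, norm_one, one_pow, one_mul,
        Real.norm_of_nonneg h0, Real.norm_of_nonneg (by positivity)]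
      exact mul_le_of_le_one_right (by positivity) hu
    calc ∫ u, ‖F l u‖ ∂μ ≤ ∫ u, t ^ (2 * l) / (Nat.factorial (2 * l) : ℝ) ∂μ :=
          integral_mono_ae (hF l).norm (integrable_const _) hle
      _ = _ := by simp
  have key := hasSum_integral_of_summable_integral_norm hF hs
  have e : ∫ u, (∑' i, F i u) ∂μ = ∫ u, Real.cos (t * √u) ∂μ := by
    refine integral_congr_ae ?_
    filter_upwards [aux_ae (a := 1/2) (b := α - 1/2)] with u hu
    rw [← (Real.hasSum_cos (t * √u)).tsum_eq]
    refine tsum_congr fun l => ?_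
    simp only [F]
    rw [mul_pow, pow_mul (√u), Real.sq_sqrt hu.1]
    ring
  rw [← e, ← key.tsum_eq]
  refine tsum_congr fun l => ?_
  simp only [F]
  rw [integral_const_mul, aux_moment ha hb, aux_coeff hα]

lemma aux_cos_gauss {b : ℝ} (hb : 0 < b) (s : ℝ) :
    ∫ t : ℝ, Real.cos (s * t) * Real.exp (-b * t ^ 2)
      = √(π / b) * Real.exp (-s ^ 2 / (4 * b)) := by
  have h := fourierIntegral_gaussian (b := (b : ℂ)) (by simpa using hb) (s : ℂ)
  have h2 := congrArg Complex.re h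
  rw [← RCLike.re_to_complex, ← integral_re] at h2
  · have e1 : ∀ t : ℝ, RCLike.re (Complex.exp (Complex.I * s * t) * Complex.exp (-(b:ℂ) * t ^ 2))
        = Real.cos (s * t) * Real.exp (-b * t ^ 2) := by
      intro t
      have : Complex.exp (-(b:ℂ) * t ^ 2) = ((Real.exp (-b * t ^ 2) : ℝ) : ℂ) := by
        push_cast; rfl
      rw [this, RCLike.re_to_complex, Complex.re_mul_ofReal]
      have : Complex.I * s * t = ((s * t : ℝ) : ℂ) * Complex.I := by push_cast; ring
      rw [this, Complex.exp_ofReal_mul_I_re]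
    simp_rw [e1] at h2
    rw [h2]
    have e2 : ((π : ℂ) / b) ^ (1 / 2 : ℂ) * Complex.exp (-(s:ℂ) ^ 2 / (4 * b))
        = ((√(π / b) * Real.exp (-s ^ 2 / (4 * b)) : ℝ) : ℂ) := by
      rw [Real.sqrt_eq_rpow, Complex.ofReal_mul, Complex.ofReal_cpow (by positivity)]
      push_cast; rfl
    rw [e2, Complex.ofReal_re]
  · refine (integrable_exp_neg_mul_sq hb).mono' (by fun_prop) ?_
    refine Filter.Eventually.of_forall fun t => ?_
    rw [norm_mul, Complex.norm_exp, Complex.norm_exp]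
    have : (-(b:ℂ) * t ^ 2) = ((-b * t ^ 2 : ℝ) : ℂ) := by push_cast; rfl
    rw [this, Complex.ofReal_re]
    simp

lemma aux_cos_int {b : ℝ} (hb : 0 < b) (s : ℝ) :
    Integrable fun t : ℝ => Real.cos (s * t) * Real.exp (-b * t ^ 2) := by
  refine (integrable_exp_neg_mul_sq hb).mono' (by fun_prop) ?_
  refine Filter.Eventually.of_forall fun t => ?_
  rw [norm_mul, Real.norm_of_nonneg (Real.exp_pos _).le]
  exact mul_le_of_le_one_left (Real.exp_pos _).le (Real.abs_cos_le_one _)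

lemma aux_bound {b : ℝ} (hb : 0 < b) {x s : ℝ} (hx : 1 < |x|) (hs : 0 ≤ s) (hs1 : s ≤ 1) :
    ‖∫ t : ℝ, Real.cos (t * x) * Real.cos (t * s) * Real.exp (-b * t ^ 2)‖
      ≤ √(π / b) * Real.exp (-(|x| - 1) ^ 2 / (4 * b)) := by
  have e : ∀ t : ℝ, Real.cos (t * x) * Real.cos (t * s) * Real.exp (-b * t ^ 2)
      = 1 / 2 * (Real.cos ((x - s) * t) * Real.exp (-b * t ^ 2)
        + Real.cos ((x + s) * t) * Real.exp (-b * t ^ 2)) := by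
    intro t
    rw [sub_mul, add_mul, Real.cos_sub, Real.cos_add, mul_comm t x, mul_comm t s]; ring
  simp_rw [e]
  rw [integral_const_mul, integral_add (aux_cos_int hb _) (aux_cos_int hb _),
    aux_cos_gauss hb, aux_cos_gauss hb, Real.norm_of_nonneg (by positivity)]
  have hmono : ∀ y : ℝ, (|x| - 1) ≤ |y| → √(π / b) * Real.exp (-y ^ 2 / (4 * b))
      ≤ √(π / b) * Real.exp (-(|x| - 1) ^ 2 / (4 * b)) := by
    intro y hy
    have : (|x| - 1) ^ 2 ≤ y ^ 2 := by
      rw [← sq_abs y]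
      exact pow_le_pow_left₀ (by linarith) hy 2
    gcongr
  have hsa : |s| ≤ 1 := by rw [abs_of_nonneg hs]; exact hs1
  have h1 := hmono (x - s) (by linarith [abs_sub_abs_le_abs_sub x s])
  have h2 := hmono (x + s) (by
    have := abs_sub_abs_le_abs_sub x (-s); rw [abs_neg, sub_neg_eq_add] at this; linarith)
  linarith

/-- For `|x| > 1`, the Fourier transform of `w(t) = ₀F₁(α; -t²/4)`
vanishes. -/
theorem stmt_10 (α : ℝ) (hα : 3 / 2 < α)
    (w : ℝ → ℝ)
    (hw : w = fun t : ℝ => ∑' ℓ : ℕ,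
      Real.Gamma α / (Real.Gamma (α + ℓ) * (Nat.factorial ℓ : ℝ)) * (-t ^ 2 / 4) ^ ℓ) :
    ∀ x : ℝ, 1 < |x| →
      (1 / (2 * Real.pi)) * ∫ t : ℝ, Real.cos (t * x) * w t = 0 := by
  intro x hx
  by_cases hI : Integrable fun t : ℝ => Real.cos (t * x) * w t
  swap
  · rw [integral_undef hI, mul_zero]
  have hb : 0 < α - 1 / 2 := by linarith
  have ha : (0:ℝ) < 1 / 2 := by norm_num
  set μ := betaMeasure (1 / 2) (α - 1 / 2) with hμ
  have : IsProbabilityMeasure μ := isProbabilityMeasureBeta ha hb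
  have hw' : ∀ t, w t = ∫ u, Real.cos (t * √u) ∂μ := fun t => by rw [hw]; exact aux_w hα t
  have lim1 : Tendsto (fun y : ℝ => ∫ t : ℝ, Real.cos (t * x) * w t * Real.exp (-y⁻¹ * t ^ 2))
      atTop (𝓝 (∫ t : ℝ, Real.cos (t * x) * w t)) := by
    refine tendsto_integral_filter_of_dominated_convergence
      (fun t => ‖Real.cos (t * x) * w t‖) ?_ ?_ hI.norm ?_
    · refine Filter.Eventually.of_forall fun y => ?_
      exact hI.1.mul (by fun_prop)
    · filter_upwards [eventually_gt_atTop 0] with y hy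
      refine Filter.Eventually.of_forall fun t => ?_
      rw [norm_mul]
      refine mul_le_of_le_one_right (norm_nonneg _) ?_
      rw [Real.norm_of_nonneg (Real.exp_pos _).le, Real.exp_le_one_iff]
      have : 0 ≤ y⁻¹ * t ^ 2 := by positivity
      linarith
    · refine Filter.Eventually.of_forall fun t => ?_
      have h : Tendsto (fun y : ℝ => Real.exp (-y⁻¹ * t ^ 2)) atTop (𝓝 (Real.exp (-0 * t ^ 2))) :=
        (Real.continuous_exp.tendsto _).comp ((tendsto_inv_atTop_zero.neg).mul_const _)
      simpa using h.const_mul (Real.cos (t * x) * w t)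
  have lim2 : Tendsto (fun y : ℝ => ∫ t : ℝ, Real.cos (t * x) * w t * Real.exp (-y⁻¹ * t ^ 2))
      atTop (𝓝 0) := by
    have hδ : 0 < (|x| - 1) ^ 2 / 4 := by
      have : 0 < |x| - 1 := by linarith
      positivity
    have hz := (tendsto_rpow_mul_exp_neg_mul_atTop_nhds_zero (1 / 2) _ hδ).const_mul (√π)
    rw [mul_zero] at hz
    refine squeeze_zero_norm' ?_ hz
    filter_upwards [eventually_gt_atTop 0] with y hy
    have hy' : 0 < y⁻¹ := inv_pos.mpr hy
    have eB : √(π / y⁻¹) * Real.exp (-(|x| - 1) ^ 2 / (4 * y⁻¹))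
        = √π * (y ^ (1 / 2 : ℝ) * Real.exp (-((|x| - 1) ^ 2 / 4) * y)) := by
      rw [div_inv_eq_mul, Real.sqrt_mul Real.pi_pos.le, ← Real.sqrt_eq_rpow, mul_assoc]
      congr 3
      field_simp
    rw [← eB]
    have e1 : ∀ t : ℝ, Real.cos (t * x) * w t * Real.exp (-y⁻¹ * t ^ 2)
        = ∫ u, Real.cos (t * x) * Real.cos (t * √u) * Real.exp (-y⁻¹ * t ^ 2) ∂μ := by
      intro t
      rw [integral_mul_const, integral_const_mul, hw']
    simp_rw [e1]
    rw [integral_integral_swap]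
    · have := norm_integral_le_of_norm_le_const (μ := μ)
        (f := fun u => ∫ t : ℝ, Real.cos (t * x) * Real.cos (t * √u) * Real.exp (-y⁻¹ * t ^ 2))
        (C := √(π / y⁻¹) * Real.exp (-(|x| - 1) ^ 2 / (4 * y⁻¹))) (by
          filter_upwards [aux_ae (a := 1/2) (b := α - 1/2)] with u hu
          exact aux_bound hy' hx (Real.sqrt_nonneg u) (Real.sqrt_le_one.mpr hu.2))
      simpa using this
    · have hg : Integrable (fun p : ℝ × ℝ => Real.exp (-y⁻¹ * p.1 ^ 2)) (volume.prod μ) :=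
        (integrable_exp_neg_mul_sq hy').comp_fst μ
      refine hg.mono' ?_ ?_
      · refine Continuous.aestronglyMeasurable ?_
        unfold Function.uncurry
        fun_prop
      · refine Filter.Eventually.of_forall fun p => ?_
        simp only [Function.uncurry]
        rw [norm_mul, norm_mul, Real.norm_of_nonneg (Real.exp_pos _).le]
        refine mul_le_of_le_one_left (Real.exp_pos _).le ?_
        exact mul_le_one₀ (Real.abs_cos_le_one _) (norm_nonneg _) (Real.abs_cos_le_one _)
  rw [tendsto_nhds_unique lim1 lim2, mul_zero]
end

section
/- Let α > 0 be real and let u, z ∈ ℝ. Then ₀F₁(α; u·z) = ∑_{j=0}^∞ (Γ(α)/(Γ(α+j)·j!))·₀F₁(α + j; u)·u^j·(z − 1)^j, where the series on the right converges absolutely. -/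
open Real

/-- The confluent hypergeometric limit function
`₀F₁(a; u) = ∑ₗ Γ(a)/(Γ(a+ℓ)·ℓ!) · uˡ`. -/
noncomputable def hyp0F1 (a u : ℝ) : ℝ :=
  ∑' ℓ : ℕ, Real.Gamma a / (Real.Gamma (a + ℓ) * (Nat.factorial ℓ : ℝ)) * u ^ ℓ

lemma gamma_lower (α : ℝ) (hα : 0 < α) : ∃ c : ℝ, 0 < c ∧ ∀ n : ℕ, c ≤ Real.Gamma (α + n) := by
  have h0 := Real.Gamma_pos_of_pos hα
  have h1 := Real.Gamma_pos_of_pos (show 0 < α + 1 by linarith)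
  refine ⟨min (Real.Gamma α) (Real.Gamma (α + 1)), lt_min h0 h1, fun n => ?_⟩
  rcases n with _ | n
  · simp
  · refine (min_le_right _ _).trans ?_
    induction n with
    | zero => simp
    | succ k ih =>
      refine ih.trans ?_
      have hp : 0 < α + ((k + 1 : ℕ) : ℝ) := by positivity
      have e : α + ((k + 1 + 1 : ℕ) : ℝ) = (α + ((k + 1 : ℕ) : ℝ)) + 1 := by push_cast; ring
      rw [e, Real.Gamma_add_one hp.ne']
      have hg := Real.Gamma_pos_of_pos hp
      have : (1 : ℝ) ≤ α + ((k + 1 : ℕ) : ℝ) := by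
        push_cast
        have : (0 : ℝ) ≤ k := Nat.cast_nonneg k
        linarith
      nlinarith

noncomputable def dterm (α u z : ℝ) (p : ℕ × ℕ) : ℝ :=
  Real.Gamma α / (Real.Gamma (α + p.1 + p.2) * ((Nat.factorial p.1 : ℝ) * (Nat.factorial p.2 : ℝ)))
    * u ^ (p.1 + p.2) * (z - 1) ^ p.1

lemma dterm_summable (α : ℝ) (hα : 0 < α) (u z : ℝ) : Summable (dterm α u z) := by
  obtain ⟨c, hc, hb⟩ := gamma_lower α hα
  have h0 := Real.Gamma_pos_of_pos hα
  have hs := ((Real.summable_pow_div_factorial |u * (z - 1)|).mul_of_nonneg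
    (Real.summable_pow_div_factorial |u|) (fun _ => by positivity) (fun _ => by positivity)).mul_left
      (Real.Gamma α / c)
  refine Summable.of_norm_bounded hs ?_
  rintro ⟨j, l⟩
  have hb' := hb (j + l)
  push_cast at hb'
  rw [← add_assoc] at hb'
  have hg : 0 < Real.Gamma (α + j + l) := hc.trans_le hb'
  have e : ‖dterm α u z (j, l)‖ = Real.Gamma α / Real.Gamma (α + j + l) *
      (|u * (z - 1)| ^ j / (Nat.factorial j : ℝ) * (|u| ^ l / (Nat.factorial l : ℝ))) := by
    simp only [dterm, Real.norm_eq_abs, abs_mul, abs_div, abs_pow, Nat.abs_cast, abs_of_pos h0,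
      abs_of_pos hg]
    field_simp
    ring
  rw [e]
  exact mul_le_mul_of_nonneg_right (div_le_div_of_nonneg_left h0.le hc hb') (by positivity)

lemma dterm_antidiag (α : ℝ) (u z : ℝ) (n : ℕ) :
    ∑ p ∈ Finset.HasAntidiagonal.antidiagonal n, dterm α u z p =
      Real.Gamma α / (Real.Gamma (α + n) * (Nat.factorial n : ℝ)) * (u * z) ^ n := by
  have hz : z ^ n = ∑ p ∈ Finset.HasAntidiagonal.antidiagonal n, (n.choose p.1 : ℝ) * ((z - 1) ^ p.1) := by
    have := (Commute.all (z - 1) 1).add_pow' n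
    simpa using this
  rw [mul_pow, hz, Finset.mul_sum, Finset.mul_sum]
  refine Finset.sum_congr rfl ?_
  rintro ⟨j, l⟩ h
  obtain rfl : j + l = n := by simpa using h
  have hch : (((j + l).choose j : ℕ) : ℝ) = (Nat.factorial (j + l) : ℝ) /
      ((Nat.factorial j : ℝ) * (Nat.factorial l : ℝ)) := Nat.cast_add_choose ℝ
  simp only [dterm, hch]
  push_cast
  rw [← add_assoc]
  have : (Nat.factorial (j + l) : ℝ) ≠ 0 := by positivity
  field_simp

lemma dterm_fiber (α : ℝ) (hα : 0 < α) (u z : ℝ) (j : ℕ) :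
    ∑' l, dterm α u z (j, l) =
      Real.Gamma α / (Real.Gamma (α + j) * (Nat.factorial j : ℝ)) *
        hyp0F1 (α + j) u * u ^ j * (z - 1) ^ j := by
  have hg : 0 < Real.Gamma (α + j) := Real.Gamma_pos_of_pos (by positivity)
  rw [hyp0F1, mul_assoc, mul_assoc, mul_comm (∑' _, _), ← mul_assoc, ← tsum_mul_left]
  refine tsum_congr fun l => ?_
  have hg2 : 0 < Real.Gamma (α + j + l) := Real.Gamma_pos_of_pos (by positivity)
  simp only [dterm]
  field_simp
  ring

/-- The expansion of `₀F₁(α; uz)` around `z = 1`: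
`₀F₁(α; uz) = ∑ⱼ Γ(α)/(Γ(α+j)·j!) · ₀F₁(α+j; u) · uʲ (z-1)ʲ`, converging absolutely. -/
theorem stmt_12 (α : ℝ) (hα : 0 < α) (u z : ℝ) :
    Summable (fun j : ℕ =>
      |Real.Gamma α / (Real.Gamma (α + j) * (Nat.factorial j : ℝ)) *
        hyp0F1 (α + j) u * u ^ j * (z - 1) ^ j|) ∧
    HasSum (fun j : ℕ =>
      Real.Gamma α / (Real.Gamma (α + j) * (Nat.factorial j : ℝ)) *
        hyp0F1 (α + j) u * u ^ j * (z - 1) ^ j)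
      (hyp0F1 α (u * z)) := by
  have hs := dterm_summable α hα u z
  have h1 := hs.hasSum.prod_fiberwise (fun j => (hs.prod_factor j).hasSum)
  simp only [dterm_fiber α hα] at h1
  have hs2 := (Finset.HasAntidiagonal.sigmaAntidiagonalEquivProd (A := ℕ)).hasSum_iff.mpr hs.hasSum
  have h2 := hs2.sigma (fun n => (Finset.hasSum (Finset.HasAntidiagonal.antidiagonal n) (dterm α u z)))
  simp only [dterm_antidiag] at h2
  have h3 : hyp0F1 α (u * z) = ∑' p, dterm α u z p := h2.tsum_eq
  rw [h3]
  exact ⟨h1.summable.abs, h1⟩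
end

section
/- Let N ≥ 1 be an integer and set n = N². Let c : ℕ → ℝ be a sequence such that for every real z with 0 < z < 1, the series ∑_{ℓ=0}^∞ c(ℓ)·z^ℓ converges to (1/(2z))·(((1+z)/(1−z))^N − 1). Then for every u ∈ ℝ, the series ∑_{ℓ=0}^∞ (Γ(n/2)/(Γ(n/2 + ℓ)·ℓ!))·c(ℓ)·u^ℓ converges and equals ∑_{j=0}^{N−1} C(N, j+1)·(Γ(n/2)/(Γ(n/2 + j)·j!))·₀F₁(n/2 + j; u)·(2u)^j, where C(N, j+1) is the binomial coefficient. (Up to a factor 1/N and the substitution u = −(rt)²/4, the left-hand side is the characteristic function φ(t, S₂(N, r)) of the spherical unitary ensemble, and this identity gives its closed form in terms of Bessel functions.) -/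
open Real

lemma aux_congr {f g : ℕ → ℝ} {a b : ℝ} (h : HasSum f a) (hfg : ∀ n, g n = f n) (hab : b = a) :
    HasSum g b := by
  have : g = f := funext hfg
  rw [this, hab]; exact h

lemma aux_summable (b u : ℝ) (hb : 0 < b) :
    Summable (fun ℓ : ℕ => Real.Gamma b / (Real.Gamma (b + ℓ) * (Nat.factorial ℓ : ℝ)) * u ^ ℓ) := by
  apply summable_of_ratio_norm_eventually_le (r := 1/2) (by norm_num)
  obtain ⟨M, hM⟩ := exists_nat_ge (2 * |u|)
  filter_upwards [Filter.eventually_ge_atTop (M + 1)] with m hm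
  have hm' : (M : ℝ) + 1 ≤ m := by exact_mod_cast hm
  have hM0 : (0 : ℝ) ≤ M := Nat.cast_nonneg M
  have hbm : 0 < b + m := by positivity
  have hG : Real.Gamma (b + (m + 1 : ℕ)) = (b + m) * Real.Gamma (b + m) := by
    push_cast
    rw [← add_assoc, Real.Gamma_add_one hbm.ne']
  have hGp := Real.Gamma_pos_of_pos hbm
  have hf : (0 : ℝ) < Nat.factorial m := by positivity
  have key : Real.Gamma b / (Real.Gamma (b + (m + 1 : ℕ)) * (Nat.factorial (m + 1) : ℝ)) * u ^ (m + 1)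
      = (u / ((b + m) * (m + 1))) *
        (Real.Gamma b / (Real.Gamma (b + m) * (Nat.factorial m : ℝ)) * u ^ m) := by
    rw [hG, Nat.factorial_succ]
    push_cast
    rw [pow_succ]
    field_simp
  rw [key, norm_mul]
  apply mul_le_mul_of_nonneg_right _ (norm_nonneg _)
  rw [Real.norm_eq_abs, abs_div, abs_of_pos (show 0 < (b + m) * ((m : ℝ) + 1) by positivity),
    div_le_iff₀ (by positivity)]
  nlinarith

lemma aux_uniq (d : ℕ → ℝ)
    (hd : ∀ z : ℝ, 0 < z → z < 1 → HasSum (fun ℓ : ℕ => d ℓ * z ^ ℓ) 0) (ℓ : ℕ) : d ℓ = 0 := by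
  have hs : ∀ z : ℝ, |z| < 1 / 2 → Summable (fun ℓ : ℕ => d ℓ * z ^ ℓ) := by
    intro z hz
    have h := (hd (1/2) (by norm_num) (by norm_num)).summable.norm
    apply Summable.of_norm_bounded h
    intro i
    rw [norm_mul, norm_mul, norm_pow, norm_pow]
    gcongr
    rw [Real.norm_eq_abs, Real.norm_eq_abs]
    rw [abs_of_pos (show (0:ℝ) < 1/2 by norm_num)]
    exact hz.le
  set f : ℝ → ℝ := fun z => ∑' ℓ : ℕ, d ℓ * z ^ ℓ with hf
  set p := FormalMultilinearSeries.ofScalars ℝ d with hp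
  have hP : HasFPowerSeriesAt f p 0 := by
    rw [hasFPowerSeriesAt_iff]
    filter_upwards [Metric.ball_mem_nhds (0:ℝ) (show (0:ℝ) < 1/2 by norm_num)] with z hz
    have hz' : |z| < 1/2 := by simpa using hz
    have := (hs z hz').hasSum
    simpa [hf, hp, mul_comm] using this
  have hfreq : ∃ᶠ z in nhdsWithin (0:ℝ) {0}ᶜ, f z = 0 := by
    have h1 : ∀ᶠ z in nhdsWithin (0:ℝ) (Set.Ioi 0), f z = 0 := by
      filter_upwards [Ioo_mem_nhdsGT (show (0:ℝ) < 1 by norm_num)] with z hz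
      exact (hd z hz.1 hz.2).tsum_eq
    exact h1.frequently.filter_mono (nhdsWithin_mono _ (fun x hx => ne_of_gt hx))
  have h0 := hP.analyticAt.frequently_zero_iff_eventually_zero.1 hfreq
  have hp0 := hP.locally_zero_iff.1 h0
  have : p.coeff ℓ = 0 := by rw [hp0]; rfl
  simpa [hp] using this

lemma aux_choose (j : ℕ) (z : ℝ) (h0 : 0 < z) (h1 : z < 1) :
    HasSum (fun ℓ : ℕ => (ℓ.choose j : ℝ) * z ^ ℓ) (z ^ j / (1 - z) ^ (j + 1)) := by
  have h := (hasSum_choose_mul_geometric_of_norm_lt_one (𝕜 := ℝ) j (r := z)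
    (by rw [Real.norm_eq_abs, abs_of_pos h0]; exact h1)).mul_left (z ^ j)
  rw [← hasSum_nat_add_iff' j, Finset.sum_eq_zero, sub_zero]
  · refine aux_congr h (fun n => ?_) ?_
    · rw [pow_add]; ring
    · ring
  · intro i hi
    rw [Nat.choose_eq_zero_of_lt (Finset.mem_range.1 hi)]; simp

lemma aux_B (N : ℕ) (z : ℝ) (h0 : 0 < z) (h1 : z < 1) :
    1 / (2 * z) * (((1 + z) / (1 - z)) ^ N - 1) =
      ∑ j ∈ Finset.range N, (N.choose (j + 1) : ℝ) * 2 ^ j * (z ^ j / (1 - z) ^ (j + 1)) := by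
  have hz : 1 - z ≠ 0 := by linarith
  have : (1 + z) / (1 - z) = 2 * z / (1 - z) + 1 := by field_simp; ring
  rw [this, add_pow, Finset.sum_range_succ']
  simp only [one_pow, mul_one, pow_zero, Nat.choose_zero_right, Nat.cast_one, add_sub_cancel_right]
  rw [Finset.mul_sum]
  apply Finset.sum_congr rfl
  intro j _
  rw [div_pow, pow_succ (2 * z), mul_pow]
  field_simp

lemma aux_term (a u : ℝ) (ha : 0 < a) (j : ℕ) :
    HasSum (fun ℓ : ℕ => Real.Gamma a / (Real.Gamma (a + ℓ) * (Nat.factorial ℓ : ℝ)) *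
        ((ℓ.choose j : ℝ) * 2 ^ j) * u ^ ℓ)
      (Real.Gamma a / (Real.Gamma (a + j) * (Nat.factorial j : ℝ)) * hyp0F1 (a + j) u
        * (2 * u) ^ j) := by
  have h := (((aux_summable (a + j) u (by positivity)).hasSum).mul_left
    (Real.Gamma a / (Real.Gamma (a + j) * (Nat.factorial j : ℝ)))).mul_right ((2 * u) ^ j)
  rw [← hasSum_nat_add_iff' j, Finset.sum_eq_zero, sub_zero]
  · refine aux_congr h (fun m => ?_) rfl
    have e : a + ((m + j : ℕ) : ℝ) = a + j + m := by push_cast; ring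
    have hG1 := (Real.Gamma_pos_of_pos (show 0 < a + j by positivity)).ne'
    have hG2 := (Real.Gamma_pos_of_pos (show 0 < a + j + m by positivity)).ne'
    have hch : ((m + j).choose j : ℝ) * (m.factorial) * (j.factorial) = (m + j).factorial := by
      exact_mod_cast Nat.add_choose_mul_factorial_mul_factorial m j
    have f1 : (m.factorial : ℝ) ≠ 0 := by positivity
    have f2 : (j.factorial : ℝ) ≠ 0 := by positivity
    have f3 : ((m + j).choose j : ℝ) ≠ 0 := by
      exact_mod_cast (Nat.choose_pos (Nat.le_add_left j m)).ne'
    rw [e, ← hch, pow_add, mul_pow]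
    field_simp
  · intro i hi
    rw [Nat.choose_eq_zero_of_lt (Finset.mem_range.1 hi)]; simp

/-- Closed form of the series `∑ₗ Γ(n/2)/(Γ(n/2+ℓ)·ℓ!)·c(ℓ)·uˡ`, where
`c(ℓ)` are the Taylor coefficients of the Harer–Zagier rational function
`(1/(2z))·(((1+z)/(1-z))^N - 1)` and `n = N²`. -/
theorem stmt_13 (N : ℕ) (hN : 1 ≤ N) (c : ℕ → ℝ)
    (hc : ∀ z : ℝ, 0 < z → z < 1 →
      HasSum (fun ℓ : ℕ => c ℓ * z ^ ℓ)
        (1 / (2 * z) * (((1 + z) / (1 - z)) ^ N - 1))) :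
    ∀ u : ℝ,
      HasSum (fun ℓ : ℕ =>
          Real.Gamma ((N : ℝ) ^ 2 / 2) /
            (Real.Gamma ((N : ℝ) ^ 2 / 2 + ℓ) * (Nat.factorial ℓ : ℝ)) * c ℓ * u ^ ℓ)
        (∑ j ∈ Finset.range N, (N.choose (j + 1) : ℝ) *
          (Real.Gamma ((N : ℝ) ^ 2 / 2) /
            (Real.Gamma ((N : ℝ) ^ 2 / 2 + j) * (Nat.factorial j : ℝ))) *
          hyp0F1 ((N : ℝ) ^ 2 / 2 + j) u * (2 * u) ^ j) := by
  intro u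
  have ha : 0 < (N : ℝ) ^ 2 / 2 := by
    have : (0 : ℝ) < N := by exact_mod_cast hN
    positivity
  have hceq : ∀ ℓ, c ℓ = ∑ j ∈ Finset.range N, (N.choose (j + 1) : ℝ) * 2 ^ j * (ℓ.choose j : ℝ) := by
    intro ℓ
    rw [← sub_eq_zero]
    refine aux_uniq (fun ℓ => c ℓ - ∑ j ∈ Finset.range N,
      (N.choose (j + 1) : ℝ) * 2 ^ j * (ℓ.choose j : ℝ)) ?_ ℓ
    intro z h0 h1
    have h := (hc z h0 h1).sub (hasSum_sum (s := Finset.range N) (fun j _ =>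
      (aux_choose j z h0 h1).mul_left ((N.choose (j + 1) : ℝ) * 2 ^ j)))
    rw [← aux_B N z h0 h1, sub_self] at h
    refine aux_congr h (fun m => ?_) rfl
    rw [sub_mul, Finset.sum_mul]
    simp only [mul_assoc]
  have h := hasSum_sum (s := Finset.range N) (fun j _ =>
    (aux_term ((N : ℝ) ^ 2 / 2) u ha j).mul_left (N.choose (j + 1) : ℝ))
  refine aux_congr h (fun ℓ => ?_) ?_
  · rw [hceq, Finset.mul_sum, Finset.sum_mul]
    apply Finset.sum_congr rfl
    intro j _
    ring
  · apply Finset.sum_congr rfl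
    intro j _
    ring
end

section
/- Let N ≥ 2 be an integer and define f : (−1, 1) → ℝ by f(x) = (1/N)·∑_{j=0}^{N−1} C(N, j+1)·(Γ(N²/2)/(2^j·√π·Γ((N²−1)/2 + j)·j!))·D^{2j}[(1 − y²)^{(N²−3)/2 + j}](x), where D^{2j}[g](x) denotes the 2j-th derivative of g evaluated at x, C(N, j+1) is a binomial coefficient, and Γ is the Gamma function. Then there exists a polynomial p_N with real coefficients such that for every x with −1 < x < 1, f(x) = p_N(x)·(1 − x²)^{(N² − 2N − 1)/2}. (The function f is the empirical spectral density f(x, S₂(N, 1)) of the spherical unitary ensemble of radius 1, and this result expresses it as a polynomial multiple of a power of 1 − x².) -/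
open Real

theorem aux_iter (a : ℝ) (k : ℕ) : ∃ q : Polynomial ℝ, ∀ x : ℝ, -1 < x → x < 1 →
    iteratedDeriv k (fun y : ℝ => (1 - y ^ 2) ^ a) x = q.eval x * (1 - x ^ 2) ^ (a - k) := by
  induction k with
  | zero => exact ⟨1, fun x _ _ => by simp⟩
  | succ k ih =>
    obtain ⟨q, hq⟩ := ih
    refine ⟨Polynomial.derivative q * (1 - Polynomial.X ^ 2)
      + q * (Polynomial.C (-2 * (a - k)) * Polynomial.X), fun x h1 h2 => ?_⟩
    have hpos : 0 < 1 - x ^ 2 := by nlinarith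
    have hev : iteratedDeriv k (fun y : ℝ => (1 - y ^ 2) ^ a) =ᶠ[nhds x]
        fun y => q.eval y * (1 - y ^ 2) ^ (a - k) := by
      filter_upwards [Ioo_mem_nhds h1 h2] with y hy
      exact hq y hy.1 hy.2
    rw [iteratedDeriv_succ, hev.deriv_eq]
    have hb : HasDerivAt (fun y : ℝ => 1 - y ^ 2) (-(2 * x)) x := by
      simpa using ((hasDerivAt_id x).pow 2).const_sub 1
    have hd := (q.hasDerivAt x).mul (hb.rpow_const (p := a - k) (Or.inl hpos.ne'))
    refine hd.deriv.trans ?_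
    have e1 : (1 - x ^ 2) ^ (a - k) = (1 - x ^ 2) ^ (a - k - 1) * (1 - x ^ 2) := by
      rw [Real.rpow_sub_one hpos.ne']
      field_simp
    have e2 : a - ((k + 1 : ℕ) : ℝ) = a - k - 1 := by push_cast; ring
    rw [e2, e1]
    simp
    ring

/-- The empirical spectral density `f(x, S₂(N,1))` of the spherical unitary
ensemble of radius `1` equals `p_N(x)·(1-x²)^{(N²-2N-1)/2}` for some polynomial `p_N`. -/
theorem stmt_15 (N : ℕ) (hN : 2 ≤ N) :
    ∃ p : Polynomial ℝ, ∀ x : ℝ, -1 < x → x < 1 →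
      (1 / (N : ℝ)) * ∑ j ∈ Finset.range N, (N.choose (j + 1) : ℝ) *
          (Real.Gamma ((N : ℝ) ^ 2 / 2) /
            (2 ^ j * Real.sqrt Real.pi * Real.Gamma (((N : ℝ) ^ 2 - 1) / 2 + j) *
              (Nat.factorial j : ℝ))) *
          iteratedDeriv (2 * j) (fun y : ℝ => (1 - y ^ 2) ^ (((N : ℝ) ^ 2 - 3) / 2 + j)) x
        = p.eval x * (1 - x ^ 2) ^ (((N : ℝ) ^ 2 - 2 * N - 1) / 2) := by
  choose q hq using aux_iter
  refine ⟨Polynomial.C (1 / (N : ℝ)) * ∑ j ∈ Finset.range N,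
    Polynomial.C ((N.choose (j + 1) : ℝ) * (Real.Gamma ((N : ℝ) ^ 2 / 2) /
            (2 ^ j * Real.sqrt Real.pi * Real.Gamma (((N : ℝ) ^ 2 - 1) / 2 + j) *
              (Nat.factorial j : ℝ)))) *
      (q (((N : ℝ) ^ 2 - 3) / 2 + j) (2 * j) * (1 - Polynomial.X ^ 2) ^ (N - 1 - j)),
    fun x h1 h2 => ?_⟩
  have hpos : 0 < 1 - x ^ 2 := by nlinarith
  rw [Polynomial.eval_mul, Polynomial.eval_C, Polynomial.eval_finsetSum, mul_assoc,
    Finset.sum_mul]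
  congr 1
  refine Finset.sum_congr rfl fun j hj => ?_
  have hj' : j < N := Finset.mem_range.1 hj
  rw [hq _ _ x h1 h2]
  have e : ((N : ℝ) ^ 2 - 3) / 2 + j - ((2 * j : ℕ) : ℝ)
      = ((N - 1 - j : ℕ) : ℝ) + ((N : ℝ) ^ 2 - 2 * N - 1) / 2 := by
    rw [Nat.sub_sub, Nat.cast_sub (by omega)]
    push_cast
    ring
  rw [e, Real.rpow_add hpos, Real.rpow_natCast]
  simp only [Polynomial.eval_mul, Polynomial.eval_C, Polynomial.eval_pow, Polynomial.eval_sub,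
    Polynomial.eval_one, Polynomial.eval_X]
  ring
end
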